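/- arXiv:math/0111182 — 3 statements merged into one kernel-verified Lean document; each statement's English description precedes it below -/
import Mathlib

section
/- Let (X, B) be a standard Borel space with a probability measure μ, let R be a hyperfinite Borel equivalence relation on X with countable classes under which μ is quasi-invariant, let A be a locally compact second countable Hausdorff topological group, and let c : R → A be a Borel cocycle (c(x,y)c(y,z) = c(x,z) whenever x R y R z). Then there exist a Bratteli diagram (V,E) with infinite path space X̄ and tail equivalence relation R̄, a Markov measure μ̄ on X̄, conull Borel sets X_0 ⊆ X and X̄_0 ⊆ X̄, a Borel isomorphism θ : X_0 → X̄_0 with θ_*μ equivalent to μ̄ and x R y ⟺ θ(x) R̄ θ(y) for x, y ∈ X_0, a labelling f : E → A with associated quasi-product cocycle c̄, and a Borel map b : X̄_0 → A such that c(x,y) = b(θ(x))^{-1} c̄(θ(x), θ(y)) b(θ(y)) for all (x,y) ∈ R with x, y ∈ X_0. -/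
open MeasureTheory

/-- `μ` is quasi-invariant under the countable Borel equivalence relation `R`: every
partial Borel automorphism of `R` maps null sets to null sets. -/
def QuasiInvariantRel {X : Type*} [MeasurableSpace X] (μ : Measure X)
    (R : X → X → Prop) : Prop :=
  ∀ (g : X → X) (A : Set X), Measurable g → MeasurableSet A → Set.InjOn g A →
    (∀ x ∈ A, R x (g x)) →
    ∀ N : Set X, MeasurableSet N → μ N = 0 → μ (g '' (N ∩ A)) = 0

/-- `R` is hyperfinite: on a conull Borel set, `R` is the union of an increasing
sequence of Borel equivalence relations with finite classes. -/
def HyperfiniteRel {X : Type*} [MeasurableSpace X] (μ : Measure X)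
    (R : X → X → Prop) : Prop :=
  ∃ (X₀ : Set X) (S : ℕ → X → X → Prop),
    MeasurableSet X₀ ∧ μ X₀ᶜ = 0 ∧
    (∀ n, MeasurableSet {p : X × X | S n p.1 p.2}) ∧
    (∀ n, ∀ x ∈ X₀, S n x x) ∧
    (∀ n x y, S n x y → S n y x) ∧
    (∀ n x y z, S n x y → S n y z → S n x z) ∧
    (∀ n x y, S n x y → x ∈ X₀ ∧ y ∈ X₀) ∧
    (∀ n x, {y | S n x y}.Finite) ∧
    (∀ n x y, S n x y → S (n + 1) x y) ∧
    (∀ x ∈ X₀, ∀ y ∈ X₀, (R x y ↔ ∃ n, S n x y))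

/-- A Bratteli diagram: finite nonempty vertex sets `V n` (levels `n = 0, 1, 2, …`),
finite edge sets `E n` (the edges from level `n` to level `n+1`), with source and
range maps, such that every vertex emits at least one edge. -/
structure BratteliDiagram where
  V : ℕ → Type
  E : ℕ → Type
  src : ∀ n, E n → V n
  rng : ∀ n, E n → V (n + 1)
  finV : ∀ n, Finite (V n)
  finE : ∀ n, Finite (E n)
  nonemptyV : ∀ n, Nonempty (V n)
  emits : ∀ n (v : V n), ∃ e : E n, src n e = v

namespace BratteliDiagram

/-- The infinite path space of a Bratteli diagram: sequences of composable edges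
starting at level `0`. -/
def PathSpace (B : BratteliDiagram) : Type :=
  { x : ∀ n, B.E n // ∀ n, B.rng n (x n) = B.src (n + 1) (x (n + 1)) }

instance (B : BratteliDiagram) (n : ℕ) : TopologicalSpace (B.E n) := ⊥

instance (B : BratteliDiagram) (n : ℕ) : DiscreteTopology (B.E n) := ⟨rfl⟩

/-- The topology on the path space generated by the cylinder sets: it is the topology
induced by the product of the discrete topologies on the edge sets. -/
instance (B : BratteliDiagram) : TopologicalSpace B.PathSpace :=
  instTopologicalSpaceSubtype

/-- The tail equivalence relation on the path space of a Bratteli diagram. -/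
def Tail (B : BratteliDiagram) (x y : B.PathSpace) : Prop :=
  ∃ N, ∀ n ≥ N, x.1 n = y.1 n

end BratteliDiagram

namespace BratteliDiagram

/-- The Borel σ-algebra on the path space. -/
instance (B : BratteliDiagram) : MeasurableSpace B.PathSpace := borel _

instance (B : BratteliDiagram) : BorelSpace B.PathSpace := ⟨rfl⟩

/-- The cylinder set determined by the first `n` edges of the path `x`. -/
def cyl (B : BratteliDiagram) (x : B.PathSpace) (n : ℕ) : Set B.PathSpace :=
  {y | ∀ k < n, y.1 k = x.1 k}

end BratteliDiagram

/-!
The Radon–Nikodym cocycle of `μ` is treated on the same footing as `c`: the pair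
`C = (c, d)`, with `d` its logarithm, is a cocycle with values in `A × ℝ`, again a locally compact
second countable group. Writing `R` as an increasing union of finite relations and discarding, at
stage `n`, the classes which are too large or on which `C` leaves a large compact set, one gets
finite relations `T n` with bounded classes on which `C` takes values in a compact set, still
exhausting `R` almost everywhere by Borel–Cantelli. If `π n` selects a point in each class of `T n`,
then `C x (π n x)` is the product of the increments `C (π k x) (π (k + 1) x)`, `k < n`. Replacing
the increments by finitely valued approximations that are close enough changes these products by
factors which converge, so `C` is cohomologous, by a bounded transfer function, to a quasi-product
cocycle with finitely many increments at each stage. The points of `X` are then coded by the paths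
of a diagram in such a way that the increments are functions of the edges, that `x` and `y` are
`T n`-equivalent exactly when their edges agree from level `n` on, and that any two paths ending
at the same vertex are exchanged by `T n`. Tilting `μ` by the real component of the transfer
function makes its Radon–Nikodym cocycle a function of the edges, and this is the Markov property.
-/

section

open Set Filter Topology ProbabilityTheory
open scoped ENNReal

/-! ### Analytic sets are null-measurable -/

section Analytic

theorem exists_lt_measure_image_inter_coord_le {α : Type*} [MeasurableSpace α] (μ : Measure α)
    (f : (ℕ → ℕ) → α) {r : ℝ≥0∞} (k : ℕ) (B : Set (ℕ → ℕ)) (hB : r < μ (f '' B)) :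
    ∃ m, r < μ (f '' (B ∩ {x | x k ≤ m})) := by
  have hunion : f '' B = ⋃ m, f '' (B ∩ {x | x k ≤ m}) := by
    rw [← image_iUnion, ← inter_iUnion, iUnion_eq_univ_iff.2 fun x => ⟨x k, le_refl (x k)⟩,
      inter_univ]
  have hmono : Monotone fun m => f '' (B ∩ {x | x k ≤ m}) := fun _ _ hab =>
    image_mono (inter_subset_inter_right _ fun _ hx => le_trans hx hab)
  rwa [hunion, hmono.measure_iUnion, lt_iSup_iff] at hB

theorem exists_forall_lt_measure_image_box {α : Type*} [MeasurableSpace α] (μ : Measure α)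
    (f : (ℕ → ℕ) → α) {r : ℝ≥0∞} (hr : r < μ (range f)) :
    ∃ φ : ℕ → ℕ, ∀ k, r < μ (f '' {x | ∀ i < k, x i ≤ φ i}) := by
  choose! m hm using exists_lt_measure_image_inter_coord_le μ f (r := r)
  let B : ℕ → Set (ℕ → ℕ) := fun k => Nat.rec univ (fun k B => B ∩ {x | x k ≤ m k B}) k
  have hB : ∀ k, r < μ (f '' B k) := fun k => by
    induction k with
    | zero => simpa [B] using hr
    | succ k ih => exact hm k _ ih
  have hBox : ∀ k, B k ⊆ {x | ∀ i < k, x i ≤ m i (B i)} := fun k => by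
    induction k with
    | zero => exact fun _ _ i hi => absurd hi i.not_lt_zero
    | succ k ih =>
      intro x hx i hi
      obtain h | rfl := Nat.lt_succ_iff_lt_or_eq.1 hi
      exacts [ih hx.1 i h, hx.2]
  exact ⟨fun k => m k (B k), fun k => (hB k).trans_le (measure_mono (image_mono (hBox k)))⟩

theorem exists_box_subset_of_isOpen (φ : ℕ → ℕ) {U : Set (ℕ → ℕ)} (hU : IsOpen U)
    (hφU : univ.pi (fun i => Iic (φ i)) ⊆ U) : ∃ k, {x : ℕ → ℕ | ∀ i < k, x i ≤ φ i} ⊆ U := by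
  by_contra! hcon
  choose x hxφ hxU using fun k => not_subset.1 (hcon k)
  have hcpt : IsCompact (univ.pi fun i => Iic (φ i)) :=
    isCompact_univ_pi fun i => (finite_Iic (φ i)).isCompact
  obtain ⟨z, hz, σ, hσ, hlim⟩ := hcpt.tendsto_subseq
    (x := fun k i => min (x k i) (φ i)) fun k i _ => mem_Iic.2 (min_le_right _ _)
  have hxz : Tendsto (x ∘ σ) atTop (𝓝 z) := by
    rw [tendsto_pi_nhds] at hlim ⊢
    refine fun i => (hlim i).congr' ?_
    filter_upwards [eventually_gt_atTop i] with k hk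
    exact min_eq_left (hxφ (σ k) i (hk.trans_le (hσ.id_le k)))
  obtain ⟨k, hk⟩ := (hxz.eventually (hU.mem_nhds (hφU hz))).exists
  exact hxU _ hk

variable {α : Type*} [TopologicalSpace α] [MeasurableSpace α] [BorelSpace α] [PolishSpace α]

theorem exists_measurable_subset_range_le_measure (μ : Measure α) [IsFiniteMeasure μ]
    {f : (ℕ → ℕ) → α} (hf : Continuous f) {r : ℝ≥0∞} (hr : r < μ (range f)) :
    ∃ t ⊆ range f, MeasurableSet t ∧ r ≤ μ t := by
  obtain ⟨φ, hφ⟩ := exists_forall_lt_measure_image_box μ f hr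
  have hcpt : IsCompact (univ.pi fun i => Iic (φ i)) :=
    isCompact_univ_pi fun i => (finite_Iic (φ i)).isCompact
  refine ⟨f '' univ.pi fun i => Iic (φ i), image_subset_range _ _,
    (hcpt.image hf).measurableSet, ?_⟩
  rw [Set.measure_eq_iInf_isOpen]
  refine le_iInf₂ fun U hU => le_iInf fun hUo => ?_
  obtain ⟨k, hk⟩ := exists_box_subset_of_isOpen φ (hUo.preimage hf) (image_subset_iff.1 hU)
  exact (hφ k).le.trans (measure_mono (image_subset_iff.2 hk))

theorem nullMeasurableSet_of_analyticSet (μ : Measure α) [IsFiniteMeasure μ] {s : Set α}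
    (hs : AnalyticSet s) : NullMeasurableSet s μ := by
  rw [AnalyticSet] at hs
  obtain rfl | ⟨f, hf, rfl⟩ := hs
  · exact MeasurableSet.empty.nullMeasurableSet
  obtain h0 | hpos := eq_zero_or_pos (μ (range f))
  · exact NullMeasurableSet.of_null h0
  obtain ⟨u, -, hu, hlim⟩ := exists_seq_strictMono_tendsto' hpos
  choose t htf ht hut using fun n => exists_measurable_subset_range_le_measure μ hf (hu n).2
  have hle : μ (range f) ≤ μ (⋃ n, t n) :=
    le_of_tendsto' hlim fun n => (hut n).trans (measure_mono (subset_iUnion _ _))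
  have hT : NullMeasurableSet (⋃ n, t n) μ := (MeasurableSet.iUnion ht).nullMeasurableSet
  exact hT.congr (ae_eq_of_subset_of_measure_ge (iUnion_subset htf) hle hT (measure_ne_top _ _))

theorem nullMeasurableSet_inter_nonempty {X : Type*} [MeasurableSpace X] [StandardBorelSpace X]
    (μ : Measure X) [IsFiniteMeasure μ] {S : X → X → Prop}
    (hS : MeasurableSet {p : X × X | S p.1 p.2}) {P : Set X} (hP : MeasurableSet P) :
    NullMeasurableSet {x | ({y | S x y} ∩ P).Nonempty} μ := by
  let := upgradeStandardBorel X
  have himage : {x | ({y | S x y} ∩ P).Nonempty} =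
      Prod.fst '' ({p : X × X | S p.1 p.2} ∩ Prod.snd ⁻¹' P) := by
    ext x
    exact ⟨fun ⟨y, hxy, hy⟩ => ⟨(x, y), ⟨hxy, hy⟩, rfl⟩,
      fun ⟨⟨_, y⟩, ⟨hxy, hy⟩, h⟩ => ⟨y, h ▸ hxy, hy⟩⟩
  rw [himage]
  exact nullMeasurableSet_of_analyticSet μ
    ((hS.inter (measurable_snd hP)).analyticSet_image measurable_fst)

end Analytic

/-! ### Finite Borel equivalence relations -/

section FiniteRelations

variable {X : Type*} [MeasurableSpace X] {μ : Measure X} {R S : X → X → Prop} {Z : Set X}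

theorem exists_measurable_argmin {Ω : Type*} [MeasurableSpace Ω] [StandardBorelSpace X]
    {F : Ω → Set X} (hfin : ∀ ω, (F ω).Finite) (hne : ∀ ω, (F ω).Nonempty)
    (hF : ∀ P, MeasurableSet P → MeasurableSet {ω | (F ω ∩ P).Nonempty}) :
    ∃ g : Ω → X, Measurable g ∧
      ∀ ω, g ω ∈ F ω ∧ ∀ y ∈ F ω, embeddingReal X (g ω) ≤ embeddingReal X y := by
  choose g hgF hgmin using fun ω => exists_min_image (F ω) (embeddingReal X) (hfin ω) (hne ω)
  refine ⟨g, ?_, fun ω => ⟨hgF ω, hgmin ω⟩⟩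
  have hemb := measurableEmbedding_embeddingReal X
  refine hemb.measurable_comp_iff.1 (measurable_of_Iio fun r => ?_)
  convert hF _ (hemb.measurable (measurableSet_Iio (a := r))) using 1
  ext ω
  exact ⟨fun h => ⟨g ω, hgF ω, h⟩, fun ⟨y, hyF, hy⟩ => (hgmin ω y hyF).trans_lt hy⟩

theorem exists_aemeasurable_selection [StandardBorelSpace X] (μ : Measure X) [IsFiniteMeasure μ]
    (hrefl : ∀ x, S x x) (hS : MeasurableSet {p : X × X | S p.1 p.2})
    (hfin : ∀ x, {y | S x y}.Finite) {P : Set X} (hP : MeasurableSet P) :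
    ∃ g : X → X, AEMeasurable g μ ∧
      ∀ x, S x (g x) ∧ (({y | S x y} ∩ P).Nonempty → g x ∈ P) := by
  classical
  let F : NullMeasurableSpace X μ → Set X := fun x =>
    if ({y | S x y} ∩ P).Nonempty then {y | S x y} ∩ P else {y | S x y}
  have hFsub : ∀ x, F x ⊆ {y | S x y} := fun x => by
    dsimp only [F]
    split_ifs
    exacts [inter_subset_left, Subset.rfl]
  have hFne : ∀ x, (F x).Nonempty := fun x => by
    dsimp only [F]
    split_ifs with h
    exacts [h, ⟨x, hrefl x⟩]
  have hFmeas : ∀ Q, MeasurableSet Q → MeasurableSet {x | (F x ∩ Q).Nonempty} := fun Q hQ => by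
    have hit : ∀ {Q}, MeasurableSet Q →
        MeasurableSet (α := NullMeasurableSpace X μ) {x | ({y | S x y} ∩ Q).Nonempty} :=
      nullMeasurableSet_inter_nonempty μ hS
    convert ((hit hP).inter (hit (hP.inter hQ))).union ((hit hP).compl.inter (hit hQ)) using 1
    ext x
    by_cases h : ({y | S x y} ∩ P).Nonempty
    · have hx : F x = {y | S x y} ∩ P := if_pos h
      simp [h, hx, inter_assoc]
    · have hx : F x = {y | S x y} := if_neg h
      simp [h, hx]
  obtain ⟨g, hg, hgF⟩ := exists_measurable_argmin (Ω := NullMeasurableSpace X μ)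
    (fun x => (hfin x).subset (hFsub x)) hFne hFmeas
  have hgm : NullMeasurable (α := X) g μ := hg
  refine ⟨g, hgm.aemeasurable, fun x => ⟨hFsub x (hgF x).1, fun h => ?_⟩⟩
  have hx : F x = {y | S x y} ∩ P := if_pos h
  exact (hx ▸ (hgF x).1).2

theorem exists_measurable_enumeration_ae [StandardBorelSpace X] (μ : Measure X)
    [IsFiniteMeasure μ] (hrefl : ∀ x, S x x) (hS : MeasurableSet {p : X × X | S p.1 p.2})
    (hfin : ∀ x, {y | S x y}.Finite) :
    ∃ γ : ℕ → X → X, (∀ j, Measurable (γ j)) ∧ ∀ᵐ x ∂μ, ∀ y, S x y ↔ ∃ j, γ j x = y := by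
  let := upgradeStandardBorel X
  have hbasis := TopologicalSpace.isBasis_countableBasis X
  obtain ⟨P, hP⟩ := ((TopologicalSpace.countable_countableBasis X).insert univ).exists_eq_range
    (insert_nonempty _ _)
  have hPopen : ∀ j, IsOpen (P j) := fun j =>
    (hP ▸ mem_range_self j).elim (fun h => h ▸ isOpen_univ) hbasis.isOpen
  choose g hg hgS hgP using fun j => exists_aemeasurable_selection μ hrefl hS hfin
    (hPopen j).measurableSet
  refine ⟨fun j => (hg j).mk _, fun j => (hg j).measurable_mk, ?_⟩
  filter_upwards [ae_all_iff.2 fun j => (hg j).ae_eq_mk] with x hx y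
  simp_rw [← hx]
  refine ⟨fun hxy => ?_, fun ⟨j, hj⟩ => hj ▸ hgS j x⟩
  have hopen : IsOpen ({z | S x z} \ {y})ᶜ := ((hfin x).subset sdiff_subset).isClosed.isOpen_compl
  obtain ⟨B, hB, hyB, hBsub⟩ :=
    hbasis.exists_subset_of_mem_open (show y ∈ ({z | S x z} \ {y})ᶜ by simp) hopen
  obtain ⟨j, rfl⟩ : B ∈ range P := hP ▸ mem_insert_of_mem _ hB
  by_contra! hne
  exact hBsub (hgP j x ⟨y, hxy, hyB⟩) ⟨hgS j x, hne j⟩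

/-- `S x y` holds exactly when `y` is one of the values at `x` of a sequence of Borel maps: the
form in which the Lusin–Novikov theorem presents a Borel relation with countable classes. -/
def HasBorelEnumeration (S : X → X → Prop) : Prop :=
  ∃ γ : ℕ → X → X, (∀ j, Measurable (γ j)) ∧ ∀ x y, S x y ↔ ∃ j, γ j x = y

theorem hasBorelEnumeration_of_partial {ι : Type*} [Countable ι] {γ : ι → X → X}
    (hγ : ∀ i, Measurable (γ i)) {D : ι → Set X} (hD : ∀ i, MeasurableSet (D i))
    (h : ∀ x y, S x y ↔ x = y ∨ ∃ i, x ∈ D i ∧ γ i x = y) : HasBorelEnumeration S := by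
  classical
  let γ' : Option ι → X → X := fun o => o.elim id fun i => (D i).piecewise (γ i) id
  have hγ' : ∀ o, Measurable (γ' o)
    | none => measurable_id
    | some i => (hγ i).piecewise (hD i) measurable_id
  have hS : ∀ x y, S x y ↔ ∃ o, γ' o x = y := fun x y => by
    rw [h, Option.exists]
    refine ⟨Or.imp id fun ⟨i, hx, hy⟩ => ⟨i, (piecewise_eq_of_mem _ _ _ hx).trans hy⟩, ?_⟩
    rintro (hxy | ⟨i, hi⟩)
    · exact Or.inl hxy
    · by_cases hx : x ∈ D i
      · exact Or.inr ⟨i, hx, (piecewise_eq_of_mem _ _ _ hx).symm.trans hi⟩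
      · exact Or.inl ((piecewise_eq_of_notMem _ _ _ hx).symm.trans hi)
  obtain ⟨e, he⟩ := exists_surjective_nat (Option ι)
  exact ⟨fun n => γ' (e n), fun n => hγ' _, fun x y => by rw [hS, he.exists]⟩

/-- An equivalence relation with finite classes that are enumerated by Borel maps. -/
structure IsFiniteBorelEquivalence (S : X → X → Prop) : Prop where
  equivalence : Equivalence S
  finite : ∀ x, {y | S x y}.Finite
  enumeration : HasBorelEnumeration S

/-- The relation that agrees with `S` on `Z` and is equality off `Z`. -/
def restrictRel {X : Type*} (Z : Set X) (S : X → X → Prop) (x y : X) : Prop :=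
  x = y ∨ S x y ∧ x ∈ Z ∧ y ∈ Z

theorem equivalence_restrictRel {X : Type*} (Z : Set X) {S : X → X → Prop}
    (hsymm : ∀ x y, S x y → S y x) (htrans : ∀ x y z, S x y → S y z → S x z) :
    Equivalence (restrictRel Z S) := by
  refine ⟨fun x => Or.inl rfl, ?_, ?_⟩
  · rintro x y (rfl | ⟨h, hx, hy⟩)
    exacts [Or.inl rfl, Or.inr ⟨hsymm _ _ h, hy, hx⟩]
  · rintro x y z (rfl | ⟨h, hx, hy⟩) (rfl | ⟨h', hy', hz⟩)
    exacts [Or.inl rfl, Or.inr ⟨h', hy', hz⟩, Or.inr ⟨h, hx, hy⟩,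
      Or.inr ⟨htrans _ _ _ h h', hx, hz⟩]

theorem finite_restrictRel {X : Type*} (Z : Set X) {S : X → X → Prop}
    (hfin : ∀ x, {y | S x y}.Finite) (x : X) : {y | restrictRel Z S x y}.Finite :=
  ((hfin x).insert x).subset fun _ => Or.imp Eq.symm And.left

theorem isFiniteBorelEquivalence_restrictRel (hS : Equivalence S)
    (hfin : ∀ x, {y | S x y}.Finite) (hZ : MeasurableSet Z) {γ : ℕ → X → X}
    (hγ : ∀ j, Measurable (γ j)) (h : ∀ x ∈ Z, ∀ y, S x y ↔ ∃ j, γ j x = y) :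
    IsFiniteBorelEquivalence (restrictRel Z S) where
  equivalence := equivalence_restrictRel Z (fun _ _ => hS.symm) (fun _ _ _ => hS.trans)
  finite := finite_restrictRel Z hfin
  enumeration := by
    refine hasBorelEnumeration_of_partial hγ (D := fun j => Z ∩ γ j ⁻¹' Z)
      (fun j => hZ.inter (hγ j hZ)) fun x y => or_congr_right ⟨?_, ?_⟩
    · rintro ⟨hxy, hx, hy⟩
      obtain ⟨j, rfl⟩ := (h x hx y).1 hxy
      exact ⟨j, ⟨hx, hy⟩, rfl⟩
    · rintro ⟨j, ⟨hx, hy⟩, rfl⟩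
      exact ⟨(h x hx _).2 ⟨j, rfl⟩, hx, hy⟩

theorem IsFiniteBorelEquivalence.restrict (hS : IsFiniteBorelEquivalence S)
    (hZ : MeasurableSet Z) : IsFiniteBorelEquivalence (restrictRel Z S) :=
  let ⟨_, hγ, h⟩ := hS.enumeration
  isFiniteBorelEquivalence_restrictRel hS.equivalence hS.finite hZ hγ fun x _ => h x

/-- An increasing sequence of finite Borel subrelations of `R` whose union is `R` on a conull
set. -/
structure FiniteBorelExhaustion (μ : Measure X) (R : X → X → Prop) (S : ℕ → X → X → Prop) :
    Prop where
  isFiniteBorel : ∀ n, IsFiniteBorelEquivalence (S n)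
  monotone : Monotone S
  le : ∀ n, S n ≤ R
  exhausts : ∃ Z ∈ ae μ, ∀ x ∈ Z, ∀ y ∈ Z, R x y → ∃ n, S n x y

theorem FiniteBorelExhaustion.restrict {S : ℕ → X → X → Prop} (hR : Equivalence R)
    (hS : FiniteBorelExhaustion μ R S) (hZ : MeasurableSet Z) (hZμ : Z ∈ ae μ) :
    FiniteBorelExhaustion μ R fun n => restrictRel Z (S n) where
  isFiniteBorel n := (hS.isFiniteBorel n).restrict hZ
  monotone _ _ hmn _ _ := Or.imp_right (And.imp_left (hS.monotone hmn _ _))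
  le n x y h := h.elim (fun h => h ▸ hR.refl x) fun h => hS.le n _ _ h.1
  exhausts := by
    obtain ⟨Z', hZ', h⟩ := hS.exhausts
    refine ⟨Z ∩ Z', inter_mem hZμ hZ', fun x hx y hy hxy => ?_⟩
    obtain ⟨n, hn⟩ := h x hx.2 y hy.2 hxy
    exact ⟨n, Or.inr ⟨hn, hx.1, hy.1⟩⟩

theorem exists_finiteBorelExhaustion [StandardBorelSpace X] [IsFiniteMeasure μ]
    (hR : Equivalence R) (hhyp : HyperfiniteRel μ R) :
    ∃ S, FiniteBorelExhaustion μ R S := by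
  obtain ⟨X₀, S, hX₀, hX₀μ, hSm, -, hsymm, htrans, -, hfin, hmono, hRS⟩ := hhyp
  let T := fun n => restrictRel X₀ (S n)
  have hT : ∀ n, Equivalence (T n) := fun n => equivalence_restrictRel X₀ (hsymm n) (htrans n)
  have hTfin : ∀ n x, {y | T n x y}.Finite := fun n => finite_restrictRel X₀ (hfin n)
  have hTm : ∀ n, MeasurableSet {p : X × X | T n p.1 p.2} := fun n =>
    measurableSet_diagonal.union ((hSm n).inter
      ((measurable_fst hX₀).inter (measurable_snd hX₀)))
  choose γ hγ hTγ using fun n => exists_measurable_enumeration_ae μ (hT n).refl (hTm n) (hTfin n)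
  obtain ⟨Z, hZμ, hZ, hZsub⟩ := (ae_all_iff.2 hTγ).exists_measurable_mem
  have hSmono : Monotone S := monotone_nat_of_le_succ hmono
  refine ⟨fun n => restrictRel Z (T n), ⟨fun n => isFiniteBorelEquivalence_restrictRel (hT n)
    (hTfin n) hZ (hγ n) fun x hx => hZsub x hx n, fun m n hmn _ _ => Or.imp_right (And.imp_left
    (Or.imp_right (And.imp_left (hSmono hmn _ _)))), fun n x y h => ?_,
    Z ∩ X₀, inter_mem hZμ hX₀μ, fun x hx y hy hxy => ?_⟩⟩
  · obtain rfl | ⟨rfl | ⟨h, hx, hy⟩, -⟩ := h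
    exacts [hR.refl x, hR.refl x, (hRS x hx y hy).2 ⟨n, h⟩]
  · obtain ⟨n, hn⟩ := (hRS x hx.2 y hy.2).1 hxy
    exact ⟨n, Or.inr ⟨Or.inr ⟨hn, hx.2, hy.2⟩, hx.1, hy.1⟩⟩

end FiniteRelations

/-! ### Radon–Nikodym potentials -/

section Counting

variable {X : Type*} [MeasurableSpace X] [MeasurableSingletonClass X] {S : X → X → Prop}

theorem count_inter_range_eq_tsum (γ : ℕ → X) (P : Set X) :
    Measure.count (range γ ∩ P) =
      ∑' j, {j | (∀ i < j, γ i ≠ γ j) ∧ γ j ∈ P}.indicator (fun _ => (1 : ℝ≥0∞)) j := by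
  classical
  have himage : range γ ∩ P = γ '' {j | (∀ i < j, γ i ≠ γ j) ∧ γ j ∈ P} := by
    refine Subset.antisymm ?_ (image_subset_iff.2 fun j hj => ⟨mem_range_self j, hj.2⟩)
    rintro y ⟨hy, hyP⟩
    have hfind : γ (Nat.find hy) = y := Nat.find_spec hy
    exact ⟨Nat.find hy, ⟨fun i hi => hfind.symm ▸ Nat.find_min hy hi, hfind.symm ▸ hyP⟩, hfind⟩
  have hinj : InjOn γ {j | (∀ i < j, γ i ≠ γ j) ∧ γ j ∈ P} := fun i hi j hj hij => by
    obtain hlt | rfl | hlt := lt_trichotomy i j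
    exacts [absurd hij (hj.1 i hlt), rfl, absurd hij.symm (hi.1 j hlt)]
  rw [← tsum_subtype, ENNReal.tsum_set_one, ← hinj.encard_image, ← himage,
    Measure.count_apply ((countable_range γ).mono inter_subset_left).measurableSet]

theorem measurable_count_class [MeasurableEq X] (hS : HasBorelEnumeration S) {P : Set (X × X)}
    (hP : MeasurableSet P) :
    Measurable fun x => Measure.count ({y | S x y} ∩ {y | (x, y) ∈ P}) := by
  obtain ⟨γ, hγ, h⟩ := hS
  have hfirst : ∀ j, MeasurableSet {x | ∀ i < j, γ i x ≠ γ j x} := fun j => by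
    simp only [ofPred_forall]
    exact MeasurableSet.iInter fun i => MeasurableSet.iInter fun _ =>
      (measurableSet_eq_fun (hγ i) (hγ j)).compl
  have hclass : ∀ x, {y | S x y} = range fun j => γ j x := fun x => by
    ext y
    exact h x y
  simp_rw [hclass, count_inter_range_eq_tsum]
  exact Measurable.tsum fun j => (measurable_const (a := (1 : ℝ≥0∞))).indicator
    ((hfirst j).inter ((measurable_id.prodMk (hγ j)) hP))

end Counting

section RadonNikodym

variable {X : Type*} [MeasurableSpace X] {μ : Measure X} {R S : X → X → Prop} {l l' s : X → ℝ}

theorem quasiInvariantRel_mono (h : QuasiInvariantRel μ R) (hSR : S ≤ R) :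
    QuasiInvariantRel μ S :=
  fun g A hg hA hinj hgS => h g A hg hA hinj fun x hx => hSR _ _ (hgS x hx)

theorem measure_saturation_eq_zero [MeasurableEq X] (hS : Equivalence S)
    (henum : HasBorelEnumeration S) (hqi : QuasiInvariantRel μ S) {B : Set X}
    (hB : MeasurableSet B) (hB0 : μ B = 0) : μ {x | ({y | S x y} ∩ B).Nonempty} = 0 := by
  obtain ⟨γ, hγ, h⟩ := henum
  have hsub : {x | ({y | S x y} ∩ B).Nonempty} ⊆
      ⋃ (i) (k), γ i '' (B ∩ {x | γ k (γ i x) = x}) := by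
    rintro x ⟨y, hxy, hy⟩
    obtain ⟨i, rfl⟩ := (h y x).1 (hS.symm hxy)
    obtain ⟨k, hk⟩ := (h _ _).1 hxy
    exact mem_iUnion₂.2 ⟨i, k, y, ⟨hy, hk⟩, rfl⟩
  refine measure_mono_null hsub (measure_iUnion_null fun i => measure_iUnion_null fun k => ?_)
  have hinj : InjOn (γ i) {x | γ k (γ i x) = x} := LeftInvOn.injOn (f₁' := γ k) fun _ hx => hx
  exact hqi (γ i) _ (hγ i) (measurableSet_eq_fun ((hγ k).comp (hγ i)) measurable_id) hinj
    (fun x _ => (h _ _).2 ⟨i, rfl⟩) B hB hB0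

/-- `l` is a logarithmic density of `μ` with respect to an `S`-invariant measure, expressed without
that measure: a partial Borel automorphism `g` of `S` has Jacobian `exp (l ∘ g - l)`. -/
def IsRadonNikodymPotential (μ : Measure X) (S : X → X → Prop) (l : X → ℝ) : Prop :=
  ∀ (g : X → X) (B : Set X), Measurable g → MeasurableSet B → InjOn g B → (∀ x ∈ B, S x (g x)) →
    μ (g '' B) = ∫⁻ y in B, ENNReal.ofReal (Real.exp (l (g y) - l y)) ∂μ

namespace IsRadonNikodymPotential

theorem mono (h : IsRadonNikodymPotential μ R l) (hSR : S ≤ R) : IsRadonNikodymPotential μ S l :=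
  fun g B hg hB hinj hgS => h g B hg hB hinj fun x hx => hSR _ _ (hgS x hx)

theorem congr (h : IsRadonNikodymPotential μ S l)
    (hll' : ∀ x y, S x y → l y - l x = l' y - l' x) : IsRadonNikodymPotential μ S l' :=
  fun g B hg hB hinj hgS => (h g B hg hB hinj hgS).trans
    (setLIntegral_congr_fun hB fun y hy => by rw [hll' _ _ (hgS y hy)])

theorem restrict_image (h : IsRadonNikodymPotential μ S l) {g : X → X} {B : Set X}
    (hg : Measurable g) (hB : MeasurableSet B) (hinj : InjOn g B) (hgS : ∀ x ∈ B, S x (g x)) :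
    μ.restrict (g '' B) = ((μ.restrict B).withDensity
      fun y => ENNReal.ofReal (Real.exp (l (g y) - l y))).map g := by
  ext C hC
  rw [Measure.restrict_apply hC, Measure.map_apply hg hC, withDensity_apply _ (hg hC),
    Measure.restrict_restrict (hg hC),
    ← h g (g ⁻¹' C ∩ B) hg ((hg hC).inter hB) (hinj.mono inter_subset_right)
      (fun x hx => hgS x hx.2), inter_comm (g ⁻¹' C), image_inter_preimage, inter_comm]

theorem withDensity [StandardBorelSpace X] (h : IsRadonNikodymPotential μ S l) (hl : Measurable l)
    (hs : Measurable s) :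
    IsRadonNikodymPotential (μ.withDensity fun x => ENNReal.ofReal (Real.exp (s x))) S (l + s) := by
  intro g B hg hB hinj hgS
  have hdens : Measurable fun x => ENNReal.ofReal (Real.exp (s x)) := by fun_prop
  rw [withDensity_apply _ (hB.image_of_measurable_injOn hg hinj),
    h.restrict_image hg hB hinj hgS, lintegral_map hdens hg,
    lintegral_withDensity_eq_lintegral_mul _ (by fun_prop) (by fun_prop), restrict_withDensity hB,
    lintegral_withDensity_eq_lintegral_mul _ hdens (by fun_prop)]
  refine lintegral_congr fun y => ?_
  simp only [Pi.mul_apply, Pi.add_apply]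
  rw [← ENNReal.ofReal_mul (Real.exp_pos _).le, ← ENNReal.ofReal_mul (Real.exp_pos _).le,
    ← Real.exp_add, ← Real.exp_add]
  congr 2
  ring

theorem tilted [StandardBorelSpace X] [NeZero μ] (h : IsRadonNikodymPotential μ S l)
    (hl : Measurable l) (hs : Measurable s) (hint : Integrable (fun x => Real.exp (s x)) μ) :
    IsRadonNikodymPotential (μ.tilted s) S (l + s) := by
  let c := Real.log (∫ x, Real.exp (s x) ∂μ)
  have hdens : (fun x => ENNReal.ofReal (Real.exp (s x) / ∫ x, Real.exp (s x) ∂μ)) =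
      fun x => ENNReal.ofReal (Real.exp (s x - c)) := by
    simp only [c, Real.exp_sub, Real.exp_log (integral_exp_pos hint)]
  rw [Measure.tilted, hdens]
  refine (h.withDensity hl (hs.sub_const c)).congr fun x y _ => ?_
  simp only [Pi.add_apply]
  ring

theorem ae_eq_on_of_leftInvOn [MeasurableEq X] [SigmaFinite μ] (h : IsRadonNikodymPotential μ S l)
    (h' : IsRadonNikodymPotential μ S l') (hl : Measurable l) (hl' : Measurable l') {g k : X → X}
    (hg : Measurable g) (hk : Measurable k) (hgS : ∀ x, S x (g x)) :
    ∀ᵐ x ∂μ, k (g x) = x → l (g x) - l x = l' (g x) - l' x := by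
  have hD : MeasurableSet {x | k (g x) = x} := measurableSet_eq_fun (hk.comp hg) measurable_id
  have hinj : InjOn g {x | k (g x) = x} := LeftInvOn.injOn (f₁' := k) fun _ hx => hx
  have hae : (fun y => ENNReal.ofReal (Real.exp (l (g y) - l y))) =ᵐ[μ.restrict {x | k (g x) = x}]
      fun y => ENNReal.ofReal (Real.exp (l' (g y) - l' y)) := by
    refine ae_eq_of_forall_setLIntegral_eq_of_sigmaFinite (by fun_prop) (by fun_prop)
      fun B hB _ => ?_
    have hinjB := hinj.mono (inter_subset_right (s := B))
    rw [Measure.restrict_restrict hB, ← h g _ hg (hB.inter hD) hinjB fun x _ => hgS x,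
      ← h' g _ hg (hB.inter hD) hinjB fun x _ => hgS x]
  filter_upwards [(ae_restrict_iff' hD).1 hae] with x hx hxk
  rw [← Real.exp_eq_exp, ← ENNReal.ofReal_eq_ofReal_iff (Real.exp_pos _).le (Real.exp_pos _).le]
  exact hx hxk

theorem ae_sub_eq_sub [MeasurableEq X] [SigmaFinite μ] (hS : Equivalence S)
    (henum : HasBorelEnumeration S) (h : IsRadonNikodymPotential μ S l)
    (h' : IsRadonNikodymPotential μ S l') (hl : Measurable l) (hl' : Measurable l') :
    ∀ᵐ x ∂μ, ∀ y, S x y → l y - l x = l' y - l' x := by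
  obtain ⟨γ, hγ, hSγ⟩ := henum
  have hae : ∀ᵐ x ∂μ, ∀ i k, γ k (γ i x) = x → l (γ i x) - l x = l' (γ i x) - l' x :=
    ae_all_iff.2 fun i => ae_all_iff.2 fun k =>
      h.ae_eq_on_of_leftInvOn h' hl hl' (hγ i) (hγ k) fun x => (hSγ _ _).2 ⟨i, rfl⟩
  filter_upwards [hae] with x hx y hxy
  obtain ⟨i, rfl⟩ := (hSγ x y).1 hxy
  obtain ⟨k, hk⟩ := (hSγ _ _).1 (hS.symm hxy)
  exact hx i k hk

end IsRadonNikodymPotential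

theorem exists_measurable_log_density {μ κ : Measure X} [SigmaFinite μ] [SigmaFinite κ]
    (hμκ : μ ≪ κ) (hκμ : κ ≪ μ) :
    ∃ l : X → ℝ, Measurable l ∧ μ = κ.withDensity fun x => ENNReal.ofReal (Real.exp (l x)) := by
  refine ⟨fun x => Real.log (μ.rnDeriv κ x).toReal, by fun_prop, ?_⟩
  have hae : μ.rnDeriv κ =ᵐ[κ]
      fun x => ENNReal.ofReal (Real.exp (Real.log (μ.rnDeriv κ x).toReal)) := by
    filter_upwards [hκμ.ae_le (Measure.rnDeriv_pos hμκ), Measure.rnDeriv_lt_top μ κ] with x h0 htop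
    rw [Real.exp_log (ENNReal.toReal_pos h0.ne' htop.ne), ENNReal.ofReal_toReal htop.ne]
  rw [← withDensity_congr_ae hae, Measure.withDensity_rnDeriv_eq _ _ hμκ]

/-- The `S`-invariant measure obtained by spreading `μ` uniformly over the finite classes of
`S`. -/
noncomputable def classAverage (μ : Measure X) (S : X → X → Prop) : Measure X :=
  μ.bind fun x => uniformOn {y | S x y}

section ClassAverage

variable [StandardBorelSpace X]

theorem measurable_uniformOn_class (hS : IsFiniteBorelEquivalence S) :
    Measurable fun x => uniformOn {y | S x y} := by
  refine Measure.measurable_of_measurable_coe _ fun B hB => ?_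
  have hcount : ∀ {B : Set X}, MeasurableSet B →
      Measurable fun x => Measure.count ({y | S x y} ∩ B) := fun hB =>
    measurable_count_class hS.enumeration (P := Prod.snd ⁻¹' _) (measurable_snd hB)
  have huniv : Measurable fun x => Measure.count {y | S x y} := by
    simpa only [inter_univ] using hcount MeasurableSet.univ
  simp_rw [uniformOn, cond_apply' hB]
  exact huniv.inv.mul (hcount hB)

theorem classAverage_apply (hS : IsFiniteBorelEquivalence S) {B : Set X} (hB : MeasurableSet B) :
    classAverage μ S B = ∫⁻ x, uniformOn {y | S x y} B ∂μ :=
  Measure.bind_apply hB (measurable_uniformOn_class hS).aemeasurable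

theorem classAverage_eq_zero_iff (hS : IsFiniteBorelEquivalence S) {B : Set X}
    (hB : MeasurableSet B) :
    classAverage μ S B = 0 ↔ μ {x | ({y | S x y} ∩ B).Nonempty} = 0 := by
  have hmeas : Measurable fun x => uniformOn {y | S x y} B :=
    (Measure.measurable_coe hB).comp (measurable_uniformOn_class hS)
  rw [classAverage_apply hS hB, lintegral_eq_zero_iff hmeas, EventuallyEq, ae_iff]
  simp only [Pi.zero_apply, uniformOn_eq_zero_iff (hS.finite _), nonempty_iff_ne_empty]

theorem isFiniteMeasure_classAverage (hS : IsFiniteBorelEquivalence S) [IsFiniteMeasure μ] :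
    IsFiniteMeasure (classAverage μ S) := by
  have hone : ∀ x, uniformOn {y | S x y} univ = 1 := fun x =>
    uniformOn_of_univ (hS.finite x) ⟨x, hS.equivalence.refl x⟩
  refine ⟨?_⟩
  simp only [classAverage_apply hS MeasurableSet.univ, hone, lintegral_one]
  exact measure_lt_top μ univ

theorem absolutelyContinuous_classAverage (hS : IsFiniteBorelEquivalence S) :
    μ ≪ classAverage μ S :=
  Measure.AbsolutelyContinuous.mk fun B hB hB0 => measure_mono_null
    (show B ⊆ {x | ({y | S x y} ∩ B).Nonempty} from fun x hx => ⟨x, hS.equivalence.refl x, hx⟩)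
    ((classAverage_eq_zero_iff hS hB).1 hB0)

theorem classAverage_absolutelyContinuous (hS : IsFiniteBorelEquivalence S)
    (hqi : QuasiInvariantRel μ S) : classAverage μ S ≪ μ :=
  Measure.AbsolutelyContinuous.mk fun _ hB hB0 => (classAverage_eq_zero_iff hS hB).2
    (measure_saturation_eq_zero hS.equivalence hS.enumeration hqi hB hB0)

theorem isRadonNikodymPotential_classAverage (hS : IsFiniteBorelEquivalence S) :
    IsRadonNikodymPotential (classAverage μ S) S 0 := by
  intro g B hg hB hinj hgS
  have himage : ∀ x, {y | S x y} ∩ g '' B = g '' ({y | S x y} ∩ B) := fun x => by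
    refine Subset.antisymm ?_ ?_
    · rintro _ ⟨hxz, z, hz, rfl⟩
      exact ⟨z, ⟨hS.equivalence.trans hxz (hS.equivalence.symm (hgS z hz)), hz⟩, rfl⟩
    · rintro _ ⟨z, ⟨hxz, hz⟩, rfl⟩
      exact ⟨hS.equivalence.trans hxz (hgS z hz), z, hz, rfl⟩
  have hcount : ∀ x, Measure.count (g '' ({y | S x y} ∩ B)) = Measure.count ({y | S x y} ∩ B) :=
    fun x => by
      have hfin : ({y | S x y} ∩ B).Finite := (hS.finite x).subset inter_subset_left
      rw [Measure.count_apply (hfin.image g).measurableSet, Measure.count_apply hfin.measurableSet,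
        (hinj.mono inter_subset_right).encard_image]
  have hgB := hB.image_of_measurable_injOn hg hinj
  simp only [Pi.zero_apply, sub_zero, Real.exp_zero, ENNReal.ofReal_one, lintegral_const,
    one_mul, Measure.restrict_apply_univ]
  rw [classAverage_apply hS hgB, classAverage_apply hS hB]
  refine lintegral_congr fun x => ?_
  rw [uniformOn, cond_apply' hgB, cond_apply' hB, himage, hcount]

theorem exists_isRadonNikodymPotential (hS : IsFiniteBorelEquivalence S) [IsFiniteMeasure μ]
    (hqi : QuasiInvariantRel μ S) :
    ∃ l : X → ℝ, Measurable l ∧ IsRadonNikodymPotential μ S l := by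
  have := isFiniteMeasure_classAverage (μ := μ) hS
  obtain ⟨l, hl, hμ⟩ := exists_measurable_log_density
    (absolutelyContinuous_classAverage (μ := μ) hS) (classAverage_absolutelyContinuous hS hqi)
  have h := (isRadonNikodymPotential_classAverage (μ := μ) hS).withDensity measurable_zero hl
  rw [← hμ, zero_add] at h
  exact ⟨l, hl, h⟩

end ClassAverage

end RadonNikodym

section RadonNikodymCocycle

variable {X : Type*} [MeasurableSpace X] {μ : Measure X} {R : X → X → Prop}

theorem exists_eq_sub_of_sub_succ_eq {X : Type*} {S : ℕ → X → X → Prop} (hS : Monotone S)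
    {l : ℕ → X → ℝ}
    (hl : ∀ n x y, S n x y → l (n + 1) y - l (n + 1) x = l n y - l n x) :
    ∃ d : X → X → ℝ, ∀ n x y, S n x y → d x y = l n x - l n y := by
  classical
  refine ⟨fun x y => if h : ∃ n, S n x y then l (Nat.find h) x - l (Nat.find h) y else 0,
    fun n x y hn => ?_⟩
  have h : ∃ n, S n x y := ⟨n, hn⟩
  have hconst : ∀ m, Nat.find h ≤ m → l (Nat.find h) x - l (Nat.find h) y = l m x - l m y :=
    fun m hm => by
      induction m, hm using Nat.le_induction with
      | base => rfl
      | succ m hm ih => linarith [hl m x y (hS hm _ _ (Nat.find_spec h))]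
  simp only [dif_pos h]
  exact hconst n (Nat.find_min' h hn)

theorem exists_radonNikodym_cocycle [StandardBorelSpace X] [IsFiniteMeasure μ] (hR : Equivalence R)
    (hqi : QuasiInvariantRel μ R) (hhyp : HyperfiniteRel μ R) :
    ∃ (S : ℕ → X → X → Prop) (d : X → X → ℝ), FiniteBorelExhaustion μ R S ∧
      ∀ n, ∃ l : X → ℝ, Measurable l ∧ IsRadonNikodymPotential μ (S n) l ∧
        ∀ x y, S n x y → d x y = l x - l y := by
  obtain ⟨S, hS⟩ := exists_finiteBorelExhaustion hR hhyp
  choose l hl hlS using fun n => exists_isRadonNikodymPotential (hS.isFiniteBorel n)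
    (quasiInvariantRel_mono hqi (hS.le n))
  have hae : ∀ᵐ x ∂μ, ∀ n y, S n x y → l (n + 1) y - l (n + 1) x = l n y - l n x :=
    ae_all_iff.2 fun n => IsRadonNikodymPotential.ae_sub_eq_sub (hS.isFiniteBorel n).equivalence
      (hS.isFiniteBorel n).enumeration ((hlS (n + 1)).mono (hS.monotone n.le_succ)) (hlS n)
      (hl _) (hl _)
  obtain ⟨Z, hZμ, hZ, hZsub⟩ := hae.exists_measurable_mem
  have hSZ := hS.restrict hR hZ hZμ
  obtain ⟨d, hd⟩ := exists_eq_sub_of_sub_succ_eq hSZ.monotone (l := l) fun n x y hxy => by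
    obtain rfl | ⟨hxy, hx, -⟩ := hxy
    · simp only [sub_self]
    · exact hZsub x hx n y hxy
  have hle : ∀ n, restrictRel Z (S n) ≤ S n := fun n x y h =>
    h.elim (fun h => h ▸ (hS.isFiniteBorel n).equivalence.refl x) And.left
  exact ⟨_, d, hSZ, fun n => ⟨l n, hl n, (hlS n).mono (hle n), hd n⟩⟩

end RadonNikodymCocycle

/-! ### Borel cocycles -/

section Cocycles

variable {X : Type*} [MeasurableSpace X] {R S : X → X → Prop} {G H : Type*} [Group G] [Group H]
  [MeasurableSpace G] [MeasurableSpace H] {C : X → X → G}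

/-- `C` is a cocycle on `R`, measurable along all pairs of Borel maps with values in `R`. The values
of `C` off `R` are irrelevant. -/
structure IsBorelCocycle (R : X → X → Prop) (C : X → X → G) : Prop where
  mul_eq : ∀ {x y z}, R x y → R y z → C x y * C y z = C x z
  measurable_comp : ∀ {u v : X → X}, Measurable u → Measurable v → (∀ x, R (u x) (v x)) →
    Measurable fun x => C (u x) (v x)

theorem isBorelCocycle_of_measurable_restrict
    (hmul : ∀ x y z, R x y → R y z → C x y * C y z = C x z)
    (hmeas : Measurable ({p : X × X | R p.1 p.2}.domRestrict fun p => C p.1 p.2)) :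
    IsBorelCocycle R C where
  mul_eq := hmul _ _ _
  measurable_comp hu hv huv :=
    hmeas.comp ((hu.prodMk hv).subtype_mk (p := fun p => R p.1 p.2) (h := huv))

namespace IsBorelCocycle

theorem mono (hC : IsBorelCocycle R C) (hSR : S ≤ R) : IsBorelCocycle S C where
  mul_eq hxy hyz := hC.mul_eq (hSR _ _ hxy) (hSR _ _ hyz)
  measurable_comp hu hv huv := hC.measurable_comp hu hv fun x => hSR _ _ (huv x)

theorem prod {D : X → X → H} (hC : IsBorelCocycle R C) (hD : IsBorelCocycle R D) :
    IsBorelCocycle R fun x y => (C x y, D x y) where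
  mul_eq hxy hyz := Prod.ext (hC.mul_eq hxy hyz) (hD.mul_eq hxy hyz)
  measurable_comp hu hv huv := (hC.measurable_comp hu hv huv).prodMk (hD.measurable_comp hu hv huv)

theorem apply_self (hC : IsBorelCocycle R C) {x : X} (hx : R x x) : C x x = 1 :=
  mul_eq_left.1 (hC.mul_eq hx hx)

end IsBorelCocycle

instance : MeasurableSpace (Multiplicative ℝ) := borel _

instance : BorelSpace (Multiplicative ℝ) := ⟨rfl⟩

theorem isBorelCocycle_ofAdd_of_eq_sub (hR : Equivalence R) {l : X → ℝ} (hl : Measurable l)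
    {d : X → X → ℝ} (hd : ∀ x y, R x y → d x y = l x - l y) :
    IsBorelCocycle R fun x y => Multiplicative.ofAdd (d x y) where
  mul_eq {x y z} hxy hyz := by
    rw [← ofAdd_add, hd _ _ hxy, hd _ _ hyz, hd _ _ (hR.trans hxy hyz), sub_add_sub_cancel]
  measurable_comp {u v} hu hv huv := by
    simp_rw [hd _ _ (huv _)]
    exact continuous_ofAdd.measurable.comp ((hl.comp hu).sub (hl.comp hv))

end Cocycles

/-! ### Truncation to bounded classes and compact cocycle values -/

section Truncation

variable {X : Type*} [MeasurableSpace X] {μ : Measure X} {G : Type*} [Group G] [MeasurableSpace G]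

/-- The union of the `S`-classes that have at most `k` elements and on which the values of `C` lie
in `K`. -/
def boundedPart {X G : Type*} (S : X → X → Prop) (C : X → X → G) (k : ℕ) (K : Set G) : Set X :=
  {x | {y | S x y}.encard ≤ k ∧ ∀ y z, S x y → S x z → C y z ∈ K}

section BoundedPart

variable {S : X → X → Prop} {C : X → X → G}

theorem measurableSet_boundedPart [MeasurableEq X] [MeasurableSingletonClass X] (hS : Equivalence S)
    (henum : HasBorelEnumeration S) (hC : IsBorelCocycle S C) (k : ℕ) {K : Set G}
    (hK : MeasurableSet K) : MeasurableSet (boundedPart S C k K) := by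
  have hcount : Measurable fun x => Measure.count {y | S x y} := by
    simpa only [mem_univ, ofPred_true, inter_univ] using
      measurable_count_class henum MeasurableSet.univ
  obtain ⟨γ, hγ, h⟩ := henum
  have hSγ : ∀ x j, S x (γ j x) := fun x j => (h _ _).2 ⟨j, rfl⟩
  have hmem : ∀ i j, MeasurableSet {x | C (γ i x) (γ j x) ∈ K} := fun i j =>
    hC.measurable_comp (hγ i) (hγ j) (fun x => hS.trans (hS.symm (hSγ x i)) (hSγ x j)) hK
  convert (hcount (measurableSet_Iic (a := (k : ℝ≥0∞)))).inter
    (MeasurableSet.iInter fun i => MeasurableSet.iInter fun j => hmem i j) using 1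
  ext x
  have hclass : MeasurableSet {y | S x y} := by
    simp only [h x]
    exact (countable_range fun j => γ j x).measurableSet
  simp only [boundedPart, mem_inter_iff, mem_iInter, mem_ofPred_eq, mem_preimage, mem_Iic,
    Measure.count_apply hclass]
  refine and_congr (by rw [← ENat.toENNReal_coe, ENat.toENNReal_le])
    ⟨fun hx i j => hx _ _ (hSγ x i) (hSγ x j), fun hx y z hy hz => ?_⟩
  obtain ⟨i, rfl⟩ := (h _ _).1 hy
  obtain ⟨j, rfl⟩ := (h _ _).1 hz
  exact hx i j

theorem mem_boundedPart_of_rel {X G : Type*} {S : X → X → Prop} {C : X → X → G} (hS : Equivalence S)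
    {k : ℕ} {K : Set G} {x y : X} (hxy : S x y) (hx : x ∈ boundedPart S C k K) :
    y ∈ boundedPart S C k K := by
  have hclass : {z | S y z} = {z | S x z} :=
    ext fun z => ⟨hS.trans hxy, hS.trans (hS.symm hxy)⟩
  exact ⟨hclass ▸ hx.1, fun a b ha hb => hx.2 a b (hS.trans hxy ha) (hS.trans hxy hb)⟩

theorem exists_mem_boundedPart {X G : Type*} [TopologicalSpace G] {S : X → X → Prop}
    (C : X → X → G) (K : CompactExhaustion G) {x : X} (hx : {y | S x y}.Finite) :
    ∃ k, x ∈ boundedPart S C k (K k) := by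
  obtain ⟨k, hk⟩ := ((hx.prod hx).image fun p => K.find (C p.1 p.2)).bddAbove
  refine ⟨max k {y | S x y}.ncard, ?_, fun y z hy hz => K.mem_iff_find_le.2 ?_⟩
  · rw [← hx.cast_ncard_eq]
    exact_mod_cast le_max_right _ _
  · exact (hk (mem_image_of_mem _ (mk_mem_prod hy hz))).trans (le_max_left _ _)

theorem exists_measure_compl_boundedPart_lt [MeasurableEq X] [MeasurableSingletonClass X]
    [TopologicalSpace G] [T2Space G] [OpensMeasurableSpace G] [IsFiniteMeasure μ]
    (K : CompactExhaustion G) (hS : IsFiniteBorelEquivalence S) (hC : IsBorelCocycle S C) {ε : ℝ≥0∞}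
    (hε : 0 < ε) : ∃ k, μ (boundedPart S C k (K k))ᶜ < ε := by
  have hanti : Antitone fun k => (boundedPart S C k (K k))ᶜ := fun k k' hk =>
    compl_subset_compl.2 fun x hx =>
      ⟨hx.1.trans (by exact_mod_cast hk), fun y z hy hz => K.subset hk (hx.2 y z hy hz)⟩
  have hlim := tendsto_measure_iInter_atTop (μ := μ)
    (fun k => (measurableSet_boundedPart hS.equivalence hS.enumeration hC k
      (K.isCompact k).measurableSet).compl.nullMeasurableSet) hanti ⟨0, measure_ne_top _ _⟩
  have hempty : ⋂ k, (boundedPart S C k (K k))ᶜ = ∅ := by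
    rw [← compl_iUnion, compl_empty_iff, eq_univ_iff_forall]
    exact fun x => mem_iUnion.2 (exists_mem_boundedPart C K (hS.finite x))
  rw [hempty, measure_empty] at hlim
  exact (hlim.eventually (gt_mem_nhds hε)).exists

end BoundedPart

/-- The relation generated by `S m` on `Y m` for `m < n`. Starting from equality keeps the
classes at stage `0` trivial. -/
def truncatedRel {X : Type*} (S : ℕ → X → X → Prop) (Y : ℕ → Set X) (n : ℕ) (x y : X) : Prop :=
  x = y ∨ ∃ m < n, S m x y ∧ x ∈ Y m

section TruncatedRel

variable {S : ℕ → X → X → Prop} {Y : ℕ → Set X}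

theorem truncatedRel_zero {X : Type*} (S : ℕ → X → X → Prop) (Y : ℕ → Set X) :
    truncatedRel S Y 0 = Eq := by
  funext x y
  simp [truncatedRel]

theorem monotone_truncatedRel {X : Type*} (S : ℕ → X → X → Prop) (Y : ℕ → Set X) :
    Monotone (truncatedRel S Y) :=
  fun _ _ hn _ _ => Or.imp_right fun ⟨m, hm, h⟩ => ⟨m, hm.trans_le hn, h⟩

theorem truncatedRel_le {X : Type*} {S : ℕ → X → X → Prop} (hS : Monotone S)
    (hrefl : ∀ n x, S n x x) (Y : ℕ → Set X) (n : ℕ) : truncatedRel S Y n ≤ S n := by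
  rintro x y (rfl | ⟨m, hm, h, -⟩)
  exacts [hrefl n x, hS hm.le _ _ h]

theorem equivalence_truncatedRel {X : Type*} {S : ℕ → X → X → Prop} {Y : ℕ → Set X}
    (hmono : Monotone S) (hS : ∀ n, Equivalence (S n))
    (hY : ∀ n x y, S n x y → x ∈ Y n → y ∈ Y n) (n : ℕ) : Equivalence (truncatedRel S Y n) := by
  refine ⟨fun x => Or.inl rfl, ?_, ?_⟩
  · rintro x y (rfl | ⟨m, hm, hxy, hx⟩)
    exacts [Or.inl rfl, Or.inr ⟨m, hm, (hS m).symm hxy, hY m _ _ hxy hx⟩]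
  · rintro x y z (rfl | ⟨m, hm, hxy, hx⟩) (rfl | ⟨m', hm', hyz, hy⟩)
    · exact Or.inl rfl
    · exact Or.inr ⟨m', hm', hyz, hy⟩
    · exact Or.inr ⟨m, hm, hxy, hx⟩
    · obtain hle | hle := le_total m m'
      · have hxy' := hmono hle _ _ hxy
        exact Or.inr ⟨m', hm', (hS m').trans hxy' hyz, hY m' _ _ ((hS m').symm hxy') hy⟩
      · exact Or.inr ⟨m, hm, (hS m).trans hxy (hmono hle _ _ hyz), hx⟩

theorem hasBorelEnumeration_truncatedRel (hS : ∀ n, HasBorelEnumeration (S n))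
    (hY : ∀ n, MeasurableSet (Y n)) (n : ℕ) : HasBorelEnumeration (truncatedRel S Y n) := by
  choose γ hγ h using hS
  refine hasBorelEnumeration_of_partial (ι := Fin n × ℕ) (fun i => hγ i.1 i.2)
    (D := fun i => Y i.1) (fun i => hY i.1) fun x y => or_congr_right ⟨?_, ?_⟩
  · rintro ⟨m, hm, hxy, hx⟩
    obtain ⟨j, rfl⟩ := (h m _ _).1 hxy
    exact ⟨⟨⟨m, hm⟩, j⟩, hx, rfl⟩
  · rintro ⟨⟨m, j⟩, hx, rfl⟩
    exact ⟨m, m.2, (h _ _ _).2 ⟨j, rfl⟩, hx⟩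

theorem exists_encard_truncatedRel_le {X : Type*} {S : ℕ → X → X → Prop} {Y : ℕ → Set X} {k : ℕ → ℕ}
    (hk : ∀ n, ∀ x ∈ Y n, {y | S n x y}.encard ≤ k n) (n : ℕ) :
    ∃ M : ℕ, ∀ x, {y | truncatedRel S Y n x y}.encard ≤ M := by
  induction n with
  | zero => exact ⟨1, fun x => by simp [truncatedRel_zero]⟩
  | succ n ih =>
    obtain ⟨M, hM⟩ := ih
    refine ⟨M + k n, fun x => ?_⟩
    have hsub : {y | truncatedRel S Y (n + 1) x y} ⊆
        {y | truncatedRel S Y n x y} ∪ {y | S n x y ∧ x ∈ Y n} := by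
      rintro y (rfl | ⟨m, hm, h⟩)
      · exact Or.inl (Or.inl rfl)
      · obtain hlt | rfl := Nat.lt_succ_iff_lt_or_eq.1 hm
        exacts [Or.inl (Or.inr ⟨m, hlt, h⟩), Or.inr h]
    refine (encard_le_encard hsub).trans ((encard_union_le _ _).trans ?_)
    push_cast
    refine add_le_add (hM x) ?_
    by_cases hx : x ∈ Y n
    · simpa only [hx, and_true] using hk n x hx
    · simp [hx]

theorem exists_isCompact_truncatedRel {X G : Type*} [TopologicalSpace G] {S : ℕ → X → X → Prop}
    {Y : ℕ → Set X} {C : X → X → G} {K : ℕ → Set G} (hK : ∀ n, IsCompact (K n)) {g : G}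
    (hCg : ∀ x, C x x = g) (hCK : ∀ n, ∀ x ∈ Y n, ∀ y, S n x y → C x y ∈ K n) (n : ℕ) :
    ∃ L, IsCompact L ∧ ∀ x y, truncatedRel S Y n x y → C x y ∈ L := by
  refine ⟨insert g (⋃ m ∈ Finset.range n, K m),
    ((Finset.range n).isCompact_biUnion fun m _ => hK m).insert g, ?_⟩
  rintro x y (rfl | ⟨m, hm, hxy, hx⟩)
  · exact Or.inl (hCg x)
  · exact Or.inr (mem_biUnion (Finset.mem_range.2 hm) (hCK m x hx y hxy))

theorem exists_bounded_exhaustion [MeasurableEq X] [MeasurableSingletonClass X]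
    [IsFiniteMeasure μ] [TopologicalSpace G] [T2Space G] [WeaklyLocallyCompactSpace G]
    [SigmaCompactSpace G] [OpensMeasurableSpace G] {R : X → X → Prop}
    (hS : FiniteBorelExhaustion μ R S) {C : X → X → G} (hC : ∀ n, IsBorelCocycle (S n) C) :
    ∃ T : ℕ → X → X → Prop, FiniteBorelExhaustion μ R T ∧ (∀ n, T n ≤ S n) ∧ T 0 = Eq ∧
      (∀ n, ∃ M : ℕ, ∀ x, {y | T n x y}.encard ≤ M) ∧
      ∀ n, ∃ K, IsCompact K ∧ ∀ x y, T n x y → C x y ∈ K := by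
  let K : CompactExhaustion G := default
  have hequiv := fun n => (hS.isFiniteBorel n).equivalence
  obtain ⟨ε, hε, hsum⟩ := ENNReal.exists_pos_sum_of_countable' one_ne_zero ℕ
  choose k hk using fun n =>
    exists_measure_compl_boundedPart_lt (μ := μ) K (hS.isFiniteBorel n) (hC n) (hε n)
  let Y : ℕ → Set X := fun n => boundedPart (S n) C (k n) (K (k n))
  have hY : ∀ n, MeasurableSet (Y n) := fun n => measurableSet_boundedPart (hequiv n)
    (hS.isFiniteBorel n).enumeration (hC n) _ (K.isCompact _).measurableSet
  have hYae : ∀ᵐ x ∂μ, ∀ᶠ n in atTop, x ∉ (Y n)ᶜ := ae_eventually_notMem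
    ((ENNReal.tsum_le_tsum fun n => (hk n).le).trans_lt (hsum.trans ENNReal.one_lt_top)).ne
  have hTS := truncatedRel_le hS.monotone (fun n => (hequiv n).refl) Y
  refine ⟨truncatedRel S Y, ⟨fun n => ⟨?_, fun x => ?_, ?_⟩, monotone_truncatedRel S Y,
    fun n => (hTS n).trans (hS.le n), ?_⟩, hTS, truncatedRel_zero S Y,
    exists_encard_truncatedRel_le fun n x hx => hx.1,
    exists_isCompact_truncatedRel (fun n => K.isCompact (k n))
      (fun x => (hC 0).apply_self ((hequiv 0).refl x))
      fun n x hx y hxy => hx.2 x y ((hequiv n).refl x) hxy⟩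
  · exact equivalence_truncatedRel hS.monotone hequiv
      (fun n x y => mem_boundedPart_of_rel (hequiv n)) n
  · exact ((hS.isFiniteBorel n).finite x).subset fun y => hTS n x y
  · exact hasBorelEnumeration_truncatedRel (fun n => (hS.isFiniteBorel n).enumeration) hY n
  · obtain ⟨Z, hZ, hR⟩ := hS.exhausts
    refine ⟨Z ∩ _, inter_mem hZ hYae, fun x hx y hy hxy => ?_⟩
    obtain ⟨n, hn⟩ := hR x hx.1 y hy.1 hxy
    obtain ⟨m, hmY, hnm⟩ := (hx.2.and (eventually_ge_atTop n)).exists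
    exact ⟨m + 1, Or.inr ⟨m, m.lt_succ_self, hS.monotone hnm _ _ hn, not_not.1 hmY⟩⟩

end TruncatedRel

end Truncation

/-! ### Finite approximation of infinite products in a locally compact group -/

section GroupApproximation

variable {G : Type*} [Group G]

/-- The ordered product `g 0 * ⋯ * g (n - 1)`. -/
def partialProd (g : ℕ → G) (n : ℕ) : G := ((List.range n).map g).prod

@[simp]
theorem partialProd_zero (g : ℕ → G) : partialProd g 0 = 1 := rfl

theorem partialProd_succ (g : ℕ → G) (n : ℕ) : partialProd g (n + 1) = partialProd g n * g n :=
  List.prod_range_succ g n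

theorem partialProd_congr {g h : ℕ → G} {n : ℕ} (hgh : ∀ k < n, g k = h k) :
    partialProd g n = partialProd h n :=
  congrArg List.prod (List.map_congr_left fun k hk => hgh k (List.mem_range.1 hk))

theorem partialProd_mul_inv_eq_of_le {g h : ℕ → G} {m n : ℕ} (hgh : ∀ k ≥ n, g k = h k)
    (hnm : n ≤ m) :
    partialProd g m * (partialProd h m)⁻¹ = partialProd g n * (partialProd h n)⁻¹ := by
  induction m, hnm using Nat.le_induction with
  | base => rfl
  | succ m hm ih =>
    rw [← ih, partialProd_succ, partialProd_succ, hgh m hm]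
    group

theorem measurable_partialProd {X : Type*} [MeasurableSpace X] [MeasurableSpace G]
    [MeasurableMul₂ G] {g : ℕ → X → G} (hg : ∀ n, Measurable (g n)) (n : ℕ) :
    Measurable fun x => partialProd (fun k => g k x) n := by
  induction n with
  | zero => exact measurable_const
  | succ n ih =>
    simp only [partialProd_succ]
    exact ih.mul (hg n)

theorem map_partialProd {H : Type*} [Group H] (F : G →* H) (g : ℕ → G) (n : ℕ) :
    F (partialProd g n) = partialProd (fun k => F (g k)) n := by
  simp only [partialProd, map_list_prod, List.map_map, Function.comp_def]

theorem mul_inv_mem_of_forall_succ_mul_inv_mem {u : ℕ → Set G} {b : ℕ → G} (hone : ∀ n, 1 ∈ u n)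
    (hmul : ∀ n, ∀ g ∈ u (n + 1), ∀ h ∈ u (n + 1), g * h ∈ u n)
    (hb : ∀ n, b (n + 1) * (b n)⁻¹ ∈ u (n + 1)) (j m : ℕ) : b (m + j) * (b m)⁻¹ ∈ u m := by
  induction j generalizing m with
  | zero => simpa using hone m
  | succ j ih => simpa [add_assoc, add_comm 1 j] using hmul m _ (ih (m + 1)) _ (hb m)

variable [TopologicalSpace G] [IsTopologicalGroup G]

theorem exists_isCompact_partialProd_mem {K : ℕ → Set G} (hK : ∀ n, IsCompact (K n)) (n : ℕ) :
    ∃ P, IsCompact P ∧ ∀ g : ℕ → G, (∀ k, g k ∈ K k) → partialProd g n ∈ P := by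
  induction n with
  | zero => exact ⟨{1}, isCompact_singleton, fun g _ => rfl⟩
  | succ n ih =>
    obtain ⟨P, hP, hPg⟩ := ih
    refine ⟨_, (hP.prod (hK n)).image continuous_mul, fun g hg => ?_⟩
    exact ⟨(partialProd g n, g n), ⟨hPg g hg, hg n⟩, (partialProd_succ g n).symm⟩

theorem eventually_forall_conj_mem {P U : Set G} (hP : IsCompact P) (hU : U ∈ 𝓝 (1 : G)) :
    ∀ᶠ w in 𝓝 (1 : G), ∀ g ∈ P, g * w * g⁻¹ ∈ U := by
  refine hP.eventually_forall_of_forall_eventually fun g _ => ?_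
  have hconj : Tendsto (fun z : G × G => z.2 * z.1 * z.2⁻¹) (𝓝 (1, g)) (𝓝 (g * 1 * g⁻¹)) :=
    Continuous.tendsto (by fun_prop) _
  rw [mul_one, mul_inv_cancel] at hconj
  exact hconj.eventually hU

theorem exists_simpleFunc_mul_inv_mem [SecondCountableTopology G] [MeasurableSpace G] [BorelSpace G]
    {K W : Set G} (hK : IsCompact K) (hW : IsOpen W) (hW1 : 1 ∈ W) :
    ∃ q : SimpleFunc G G, (∀ a, q a ∈ insert 1 K) ∧ ∀ a ∈ K, q a * a⁻¹ ∈ W := by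
  refine hK.induction_on (p := fun s => ∃ q : SimpleFunc G G, (∀ a, q a ∈ insert 1 K) ∧
    ∀ a ∈ s, q a * a⁻¹ ∈ W) ?_ ?_ ?_ fun a ha => ?_
  · exact ⟨SimpleFunc.const G 1, fun _ => mem_insert 1 K, fun _ h => h.elim⟩
  · rintro s t hst ⟨q, hqK, hq⟩
    exact ⟨q, hqK, fun a ha => hq a (hst ha)⟩
  · rintro s t ⟨q, hqK, hq⟩ ⟨q', hqK', hq'⟩
    have hgood : MeasurableSet {a | q a * a⁻¹ ∈ W} :=
      (q.measurable.mul measurable_inv) hW.measurableSet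
    refine ⟨q.piecewise _ hgood q', fun a => ?_, fun a ha => ?_⟩ <;>
      rw [SimpleFunc.piecewise_apply] <;> split_ifs with haW
    exacts [hqK a, hqK' a, haW, hq' a (ha.resolve_left fun has => haW (hq a has))]
  · have hnhds : {a' | a * a'⁻¹ ∈ W} ∈ 𝓝 a :=
      (hW.preimage (by fun_prop : Continuous fun a' => a * a'⁻¹)).mem_nhds (by simpa using hW1)
    exact ⟨_, mem_nhdsWithin_of_mem_nhds hnhds, SimpleFunc.const G a,
      fun _ => mem_insert_of_mem 1 ha, fun _ h => h⟩

theorem exists_tendsto_of_forall_succ_mul_inv_mem {u : ℕ → Set G} {b : ℕ → G}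
    (hu : (𝓝 (1 : G)).HasAntitoneBasis u)
    (hmul : ∀ n, ∀ g ∈ u (n + 1), ∀ h ∈ u (n + 1), g * h ∈ u n) {Q : Set G} (hQ : IsCompact Q)
    (hbQ : ∀ n, b n ∈ Q) (hb : ∀ n, b (n + 1) * (b n)⁻¹ ∈ u (n + 1)) :
    ∃ g ∈ Q, Tendsto b atTop (𝓝 g) := by
  obtain ⟨g, hgQ, hg⟩ := hQ.exists_mapClusterPt (f := atTop) (u := b)
    (le_principal_iff.2 (mem_map.2 (Eventually.of_forall hbQ)))
  refine ⟨g, hgQ, ?_⟩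
  suffices hlim : Tendsto (fun n => b n * g⁻¹) atTop (𝓝 1) by
    simpa using hlim.mul_const g
  refine hu.toHasBasis.tendsto_right_iff.2 fun j _ => ?_
  have hnear : {h | h * g⁻¹ ∈ u (j + 1)} ∈ 𝓝 g := by
    have hcont : Continuous fun h : G => h * g⁻¹ := by fun_prop
    exact hcont.continuousAt.preimage_mem_nhds (by simpa using hu.mem (j + 1))
  obtain ⟨m, hm, hjm⟩ := ((hg.frequently hnear).and_eventually (eventually_ge_atTop (j + 1))).exists
  filter_upwards [eventually_ge_atTop m] with n hn
  obtain ⟨i, rfl⟩ := Nat.exists_eq_add_of_le hn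
  have htail := mul_inv_mem_of_forall_succ_mul_inv_mem (fun n => mem_of_mem_nhds (hu.mem n)) hmul hb
    i m
  simpa using hmul j _ (hu.antitone hjm htail) _ hm

theorem exists_antitone_basis_subset [FirstCountableTopology G] {Q : Set G} (hQ : Q ∈ 𝓝 (1 : G)) :
    ∃ u : ℕ → Set G, (𝓝 (1 : G)).HasAntitoneBasis u ∧
      (∀ n, ∀ g ∈ u (n + 1), ∀ h ∈ u (n + 1), g * h ∈ u n) ∧ u 0 ⊆ Q := by
  obtain ⟨u, hu, hmul⟩ := IsTopologicalGroup.exists_antitone_basis_nhds_one G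
  obtain ⟨m, -, hm⟩ := hu.toHasBasis.mem_iff.1 hQ
  refine ⟨fun n => u (m + n), hu.comp_strictMono (strictMono_id.const_add m),
    fun n g hg h hh => hmul (m + n) (Set.mul_mem_mul hg hh), hm⟩

theorem exists_simpleFunc_forall_tendsto_partialProd_mul_inv [LocallyCompactSpace G]
    [SecondCountableTopology G] [MeasurableSpace G] [BorelSpace G] {K : ℕ → Set G}
    (hK : ∀ n, IsCompact (K n)) :
    ∃ (Q : Set G) (q : ℕ → SimpleFunc G G), IsCompact Q ∧ ∀ a : ℕ → G, (∀ n, a n ∈ K n) →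
      ∃ b ∈ Q, Tendsto (fun n => partialProd (fun k => q k (a k)) n * (partialProd a n)⁻¹)
        atTop (𝓝 b) := by
  obtain ⟨Q, hQ, hQ1⟩ := exists_compact_mem_nhds (1 : G)
  obtain ⟨u, hu, hmul, huQ⟩ := exists_antitone_basis_subset hQ1
  choose P hP hPmem using exists_isCompact_partialProd_mem fun n => (hK n).insert 1
  choose W hWconj hWopen hW1 using fun n =>
    mem_nhds_iff.1 (eventually_forall_conj_mem (hP n) (hu.mem (n + 1)))
  choose q hqK hqW using fun n => exists_simpleFunc_mul_inv_mem (hK n) (hWopen n) (hW1 n)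
  refine ⟨Q, q, hQ, fun a ha => ?_⟩
  set b : ℕ → G := fun n => partialProd (fun k => q k (a k)) n * (partialProd a n)⁻¹ with hb
  have hstep : ∀ n, b (n + 1) * (b n)⁻¹ ∈ u (n + 1) := fun n => by
    convert hWconj n (hqW n (a n) (ha n)) (partialProd (fun k => q k (a k)) n)
      (hPmem n _ fun k => hqK k _) using 1
    simp only [hb, partialProd_succ]
    group
  have hbQ : ∀ n, b n ∈ Q := fun n => huQ <| by
    simpa [hb] using mul_inv_mem_of_forall_succ_mul_inv_mem (fun n => mem_of_mem_nhds (hu.mem n))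
      hmul hstep n 0
  exact exists_tendsto_of_forall_succ_mul_inv_mem hu hmul hQ hbQ hstep

end GroupApproximation

/-! ### Coding points by paths -/

section Coding

variable {X : Type*} [MeasurableSpace X] {S S' : X → X → Prop} {α : Type*}

theorem exists_simpleFunc_nat_eq_iff (φ : SimpleFunc X α) :
    ∃ ψ : SimpleFunc X ℕ, ∀ x y, ψ x = ψ y ↔ φ x = φ y := by
  obtain ⟨f, hf⟩ := Set.countable_iff_exists_injOn.1 φ.finite_range.countable
  exact ⟨φ.map f, fun x y => hf.eq_iff (mem_range_self x) (mem_range_self y)⟩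

/-- A relabelling of the values of a simple function by natural numbers, which gives all codes
below a common type. -/
noncomputable def simpleCode (φ : SimpleFunc X α) : SimpleFunc X ℕ :=
  (exists_simpleFunc_nat_eq_iff φ).choose

theorem simpleCode_eq_iff {φ : SimpleFunc X α} {x y : X} :
    simpleCode φ x = simpleCode φ y ↔ φ x = φ y :=
  (exists_simpleFunc_nat_eq_iff φ).choose_spec x y

theorem exists_measurable_representative [StandardBorelSpace X]
    (hS : IsFiniteBorelEquivalence S) :
    ∃ π : X → X, Measurable π ∧ (∀ x, S x (π x)) ∧ ∀ x y, S x y → π x = π y := by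
  obtain ⟨γ, hγ, hSγ⟩ := hS.enumeration
  have hhit : ∀ P, MeasurableSet P → MeasurableSet {x | ({y | S x y} ∩ P).Nonempty} :=
    fun P hP => by
      convert MeasurableSet.iUnion fun j => hγ j hP using 1
      ext x
      simp [Set.Nonempty, hSγ]
  obtain ⟨π, hπ, hmin⟩ := exists_measurable_argmin hS.finite
    (fun x => ⟨x, hS.equivalence.refl x⟩) hhit
  refine ⟨π, hπ, fun x => (hmin x).1, fun x y hxy => ?_⟩
  refine (measurableEmbedding_embeddingReal X).injective (le_antisymm ?_ ?_)
  · exact (hmin x).2 _ (hS.equivalence.trans hxy (hmin y).1)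
  · exact (hmin y).2 _ (hS.equivalence.trans (hS.equivalence.symm hxy) (hmin x).1)

/-- The position of `x` in its class for the linear order pulled back from `ℝ` along the Borel
embedding `embeddingReal X`. -/
noncomputable def classRank [StandardBorelSpace X] (S : X → X → Prop) (x : X) : ℕ :=
  ({y | S x y} ∩ {y | embeddingReal X y < embeddingReal X x}).ncard

theorem measurable_classRank [StandardBorelSpace X] (hS : IsFiniteBorelEquivalence S) :
    Measurable (classRank S) := by
  have hι := (measurableEmbedding_embeddingReal X).measurable
  have hcount := measurable_count_class hS.enumeration
    (measurableSet_lt (hι.comp measurable_snd) (hι.comp measurable_fst))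
  refine measurable_to_countable' fun k => ?_
  convert hcount (measurableSet_singleton (k : ℝ≥0∞)) using 1
  ext x
  have hfin := (hS.finite x).subset (inter_subset_left (t := {y | embeddingReal X y <
    embeddingReal X x}))
  change ncard _ = k ↔ Measure.count ({y | S x y} ∩ {y | embeddingReal X y <
    embeddingReal X x}) = k
  rw [Measure.count_apply hfin.measurableSet, ← hfin.cast_ncard_eq]
  norm_num

theorem classRank_lt_classRank [StandardBorelSpace X] (hS : IsFiniteBorelEquivalence S) {x y : X}
    (hxy : S x y) (hlt : embeddingReal X x < embeddingReal X y) :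
    classRank S x < classRank S y := by
  refine ncard_lt_ncard ⟨fun z hz => ?_, fun hsub => ?_⟩ ((hS.finite y).subset inter_subset_left)
  · exact ⟨hS.equivalence.trans (hS.equivalence.symm hxy) hz.1, hz.2.trans hlt⟩
  · exact lt_irrefl (embeddingReal X x) (hsub ⟨hS.equivalence.symm hxy, hlt⟩).2

theorem exists_simpleFunc_injOn_classes [StandardBorelSpace X] (hS : IsFiniteBorelEquivalence S)
    {M : ℕ} (hM : ∀ x, {y | S x y}.encard ≤ M) :
    ∃ ρ : SimpleFunc X ℕ, ∀ x y, S x y → ρ x = ρ y → x = y := by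
  have hbound : ∀ x, classRank S x ≤ M := fun x =>
    (ncard_le_ncard inter_subset_left (hS.finite x)).trans (ENat.toNat_le_of_le_natCast (hM x))
  refine ⟨⟨classRank S, fun k => measurable_classRank hS (measurableSet_singleton k),
    (finite_Iic M).subset (range_subset_iff.2 hbound)⟩, fun x y hxy hrank => ?_⟩
  by_contra hne
  obtain h | h := ((measurableEmbedding_embeddingReal X).injective.ne hne).lt_or_gt
  · exact (classRank_lt_classRank hS hxy h).ne hrank
  · exact (classRank_lt_classRank hS (hS.equivalence.symm hxy) h).ne hrank.symm

theorem exists_simpleFunc_separating_subclasses [StandardBorelSpace X]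
    (hS : IsFiniteBorelEquivalence S) (hS' : IsFiniteBorelEquivalence S') (hSS' : S ≤ S') {M : ℕ}
    (hM : ∀ x, {y | S' x y}.encard ≤ M) :
    ∃ r : SimpleFunc X ℕ, (∀ x y, S x y → r x = r y) ∧
      ∀ x y, S' x y → r x = r y → S x y := by
  obtain ⟨π, hπ, hSπ, hπS⟩ := exists_measurable_representative hS
  obtain ⟨ρ, hρ⟩ := exists_simpleFunc_injOn_classes hS' hM
  refine ⟨ρ.comp π hπ, fun x y hxy => congrArg ρ (hπS x y hxy), fun x y hxy hr => ?_⟩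
  have hπxy : S' (π x) (π y) := hS'.equivalence.trans (hS'.equivalence.symm (hSS' _ _ (hSπ x)))
    (hS'.equivalence.trans hxy (hSS' _ _ (hSπ y)))
  have hπeq : π x = π y := hρ _ _ hπxy hr
  exact hS.equivalence.trans (hSπ x) (hπeq ▸ hS.equivalence.symm (hSπ y))

end Coding

section PathCoding

variable {X : Type*} [MeasurableSpace X]

/-- The set of values taken by `h` on the class of `x`, as a simple function of `x`. -/
def classPattern {S : X → X → Prop} (hS : HasBorelEnumeration S) (h : SimpleFunc X ℕ) :
    SimpleFunc X (Set ℕ) where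
  toFun x := h '' {y | S x y}
  measurableSet_fiber' F := by
    obtain ⟨γ, hγ, hSγ⟩ := hS
    have hval : ∀ a, MeasurableSet {x | ∃ j, h (γ j x) = a} := fun a => by
      simp only [ofPred_exists]
      exact MeasurableSet.iUnion fun j => (h.measurable.comp (hγ j)) (measurableSet_singleton a)
    convert MeasurableSet.iInter fun a => (hval a).iff (MeasurableSet.const (a ∈ F)) using 1
    ext x
    simp [Set.ext_iff, hSγ]
  finite_range' := h.finite_range.finite_subsets.subset
    (range_subset_iff.2 fun _ => image_subset_range _ _)

variable {T : ℕ → X → X → Prop} {hT : ∀ n, HasBorelEnumeration (T n)} {o r : ℕ → SimpleFunc X ℕ}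
  {n : ℕ} {x y z : X}

/-- The record up to time `n` of the observations `o k`, interleaved with the patterns that the
earlier records form on the classes of `T k`. -/
noncomputable def history (hT : ∀ n, HasBorelEnumeration (T n)) (o : ℕ → SimpleFunc X ℕ) :
    ℕ → SimpleFunc X ℕ
  | 0 => SimpleFunc.const X 0
  | n + 1 => simpleCode ((history hT o n).pair
      ((classPattern (hT n) (history hT o n)).pair (o n)))

/-- The vertex at level `n` through which the path of a point passes: the pattern of histories on
its `T n`-class. -/
noncomputable def vertexCode (hT : ∀ n, HasBorelEnumeration (T n)) (o : ℕ → SimpleFunc X ℕ)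
    (n : ℕ) : SimpleFunc X ℕ :=
  simpleCode (classPattern (hT n) (history hT o n))

/-- The edge from level `n` to level `n + 1` on the path of a point: `r n` singles out a `T n`-class
inside the `T (n + 1)`-class described by the target vertex. -/
noncomputable def edgeCode (hT : ∀ n, HasBorelEnumeration (T n)) (o r : ℕ → SimpleFunc X ℕ)
    (n : ℕ) : SimpleFunc X ℕ :=
  simpleCode ((vertexCode hT o (n + 1)).pair (r n))

theorem history_succ_eq_iff : history hT o (n + 1) x = history hT o (n + 1) y ↔
    history hT o n x = history hT o n y ∧ vertexCode hT o n x = vertexCode hT o n y ∧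
      o n x = o n y := by
  simp only [history, vertexCode, simpleCode_eq_iff, SimpleFunc.pair_apply, Prod.mk.injEq]

theorem edgeCode_eq_iff : edgeCode hT o r n x = edgeCode hT o r n y ↔
    vertexCode hT o (n + 1) x = vertexCode hT o (n + 1) y ∧ r n x = r n y := by
  simp only [edgeCode, simpleCode_eq_iff, SimpleFunc.pair_apply, Prod.mk.injEq]

theorem vertexCode_eq_of_rel (hE : Equivalence (T n)) (hxy : T n x y) :
    vertexCode hT o n x = vertexCode hT o n y := by
  have hclass : {z | T n x z} = {z | T n y z} :=
    Set.ext fun z => ⟨hE.trans (hE.symm hxy), hE.trans hxy⟩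
  exact simpleCode_eq_iff.2 (congrArg (history hT o n '' ·) hclass)

theorem exists_rel_history_eq (hE : Equivalence (T n))
    (hxz : vertexCode hT o n x = vertexCode hT o n z) :
    ∃ y, T n y z ∧ history hT o n y = history hT o n x := by
  have hpattern : history hT o n '' {y | T n x y} = history hT o n '' {y | T n z y} :=
    simpleCode_eq_iff.1 hxz
  obtain ⟨y, hy, hyx⟩ := hpattern ▸ mem_image_of_mem (history hT o n) (hE.refl x)
  exact ⟨y, hE.symm hy, hyx⟩

theorem edgeCode_eq_of_history_eq (hr : ∀ n x y, o n x = o n y → r n x = r n y)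
    (hH : history hT o n x = history hT o n y)
    (ht : vertexCode hT o n x = vertexCode hT o n y) :
    ∀ k < n, edgeCode hT o r k x = edgeCode hT o r k y := by
  induction n with
  | zero => exact fun k hk => absurd hk k.not_lt_zero
  | succ n ih =>
    obtain ⟨hHn, htn, hon⟩ := history_succ_eq_iff.1 hH
    intro k hk
    obtain hk | rfl := Nat.lt_succ_iff_lt_or_eq.1 hk
    · exact ih hHn htn k hk
    · exact edgeCode_eq_iff.2 ⟨ht, hr k x y hon⟩

/-- `r n` tells apart the `T n`-classes inside each `T (n + 1)`-class. -/
structure SeparatesSubclasses (T : ℕ → X → X → Prop) (r : ℕ → SimpleFunc X ℕ) : Prop where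
  eq_of_rel : ∀ {n x y}, T n x y → r n x = r n y
  rel_of_eq : ∀ {n x y}, T (n + 1) x y → r n x = r n y → T n x y

theorem eq_of_edgeCode_eq {α : Type*} {φ : X → α} (hE : Equivalence (T (n + 1)))
    (hr : ∀ n x y, o n x = o n y → r n x = r n y) (hrT : SeparatesSubclasses T r)
    (hφ : ∀ x y, T n x y → φ x = φ y)
    (hHφ : ∀ x y, history hT o (n + 1) x = history hT o (n + 1) y → φ x = φ y)
    (hxy : edgeCode hT o r n x = edgeCode hT o r n y) : φ x = φ y := by
  obtain ⟨ht, hrxy⟩ := edgeCode_eq_iff.1 hxy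
  obtain ⟨x', hx'y, hx'⟩ := exists_rel_history_eq hE ht
  have hx'r : r n x' = r n x := hr n _ _ (history_succ_eq_iff.1 hx').2.2
  exact (hHφ _ _ hx').symm.trans (hφ _ _ (hrT.rel_of_eq hx'y (hx'r.trans hrxy)))

theorem eq_of_rel_of_edgeCode_eq (hT0 : T 0 = Eq) (hrT : SeparatesSubclasses T r)
    (hxy : T n x y) (he : ∀ k < n, edgeCode hT o r k x = edgeCode hT o r k y) : x = y := by
  induction n with
  | zero => exact hT0 ▸ hxy
  | succ n ih =>
    exact ih (hrT.rel_of_eq hxy (edgeCode_eq_iff.1 (he n n.lt_succ_self)).2)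
      fun k hk => he k (hk.trans n.lt_succ_self)

/-- `t n` and `e n` describe an infinite path for every point, with vertices `t n x` and edges
`e n x` from `t n x` to `t (n + 1) x`, such that paths determine their points and two points are
related by `T n` exactly when their paths agree from level `n` on; moreover any initial path into a
vertex is realised inside each class with that vertex. -/
structure IsPathCoding (T : ℕ → X → X → Prop) (t e : ℕ → SimpleFunc X ℕ) : Prop where
  monotone : Monotone T
  vertex_eq_of_rel : ∀ {n x y}, T n x y → t n x = t n y
  source_eq : ∀ {n x y}, e n x = e n y → t n x = t n y
  range_eq : ∀ {n x y}, e n x = e n y → t (n + 1) x = t (n + 1) y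
  edge_eq_of_rel : ∀ {n x y}, T n x y → e n x = e n y
  exists_rel_of_vertex_eq : ∀ {n x z}, t n x = t n z → ∃ y, T n y z ∧ ∀ k < n, e k y = e k x
  eq_of_rel : ∀ {n x y}, T n x y → (∀ k < n, e k x = e k y) → x = y
  injective : ∀ {x y}, (∀ k, e k x = e k y) → x = y

theorem isPathCoding_vertexCode_edgeCode (hE : ∀ n, Equivalence (T n)) (hmono : Monotone T)
    (hT0 : T 0 = Eq) (hrT : SeparatesSubclasses T r)
    (hr : ∀ n x y, o n x = o n y → r n x = r n y)
    (ho : ∀ x y, (∀ n, o n x = o n y) → x = y) :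
    IsPathCoding T (vertexCode hT o) (edgeCode hT o r) where
  monotone := hmono
  vertex_eq_of_rel := vertexCode_eq_of_rel (hE _)
  source_eq := eq_of_edgeCode_eq (hE _) hr hrT (fun _ _ => vertexCode_eq_of_rel (hE _))
    fun _ _ h => (history_succ_eq_iff.1 h).2.1
  range_eq h := (edgeCode_eq_iff.1 h).1
  edge_eq_of_rel h := edgeCode_eq_iff.2
    ⟨vertexCode_eq_of_rel (hE _) (hmono (Nat.le_succ _) _ _ h), hrT.eq_of_rel h⟩
  exists_rel_of_vertex_eq h := by
    obtain ⟨y, hyz, hy⟩ := exists_rel_history_eq (hE _) h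
    exact ⟨y, hyz, edgeCode_eq_of_history_eq hr hy ((vertexCode_eq_of_rel (hE _) hyz).trans h.symm)⟩
  eq_of_rel := eq_of_rel_of_edgeCode_eq hT0 hrT
  injective {x y} h := ho x y fun n => by
    have ht := (edgeCode_eq_iff.1 (h n)).1
    obtain ⟨x', hx'y, hx'⟩ := exists_rel_history_eq (hE _) ht
    have hx'e := edgeCode_eq_of_history_eq hr hx' ((vertexCode_eq_of_rel (hE _) hx'y).trans ht.symm)
    obtain rfl : x' = y :=
      eq_of_rel_of_edgeCode_eq hT0 hrT hx'y fun k hk => (hx'e k hk).trans (h k)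
    exact (history_succ_eq_iff.1 hx').2.2.symm

theorem IsPathCoding.edge_eq_of_le {t e : ℕ → SimpleFunc X ℕ} (h : IsPathCoding T t e)
    (hxy : T n x y) {k : ℕ} (hk : n ≤ k) : e k x = e k y :=
  h.edge_eq_of_rel (h.monotone hk _ _ hxy)

theorem IsPathCoding.rel_iff {t e : ℕ → SimpleFunc X ℕ} (h : IsPathCoding T t e) :
    T n x y ↔ ∀ k ≥ n, e k x = e k y := by
  refine ⟨fun hxy k hk => h.edge_eq_of_le hxy hk, fun hxy => ?_⟩
  obtain ⟨x', hx'y, hx'⟩ := h.exists_rel_of_vertex_eq (h.source_eq (hxy n le_rfl))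
  obtain rfl : x' = x := h.injective fun k => by
    obtain hk | hk := lt_or_ge k n
    · exact hx' k hk
    · exact (h.edge_eq_of_le hx'y hk).trans (hxy k hk).symm
  exact hx'y

theorem exists_simpleFunc_bool_separating [MeasurableSpace.CountablyGenerated X]
    [MeasurableSpace.SeparatesPoints X] :
    ∃ bit : ℕ → SimpleFunc X Bool, ∀ x y, (∀ n, bit n x = bit n y) → x = y := by
  have hm := measurable_pi_iff.1 (MeasurableSpace.measurable_mapNatBool X)
  exact ⟨fun n => ⟨fun x => MeasurableSpace.mapNatBool X x n,
    fun b => hm n (measurableSet_singleton b), toFinite _⟩,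
    fun x y h => MeasurableSpace.injective_mapNatBool X (funext h)⟩

theorem exists_pathCoding [StandardBorelSpace X] (hT : ∀ n, IsFiniteBorelEquivalence (T n))
    (hmono : Monotone T) (hT0 : T 0 = Eq) (hM : ∀ n, ∃ M : ℕ, ∀ x, {y | T n x y}.encard ≤ M)
    {α : Type*} {φ : ℕ → SimpleFunc X α} (hφ : ∀ n x y, T n x y → φ n x = φ n y) :
    ∃ t e, IsPathCoding T t e ∧ ∀ n, Function.FactorsThrough (φ n) (e n) := by
  choose M hM using hM
  choose r hrT hTr using fun n => exists_simpleFunc_separating_subclasses (hT n) (hT (n + 1))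
    (hmono n.le_succ) (hM (n + 1))
  obtain ⟨bit, hbit⟩ := exists_simpleFunc_bool_separating (X := X)
  let o : ℕ → SimpleFunc X ℕ := fun n => simpleCode ((r n).pair ((bit n).pair (φ n)))
  have ho : ∀ n x y, o n x = o n y → r n x = r n y ∧ bit n x = bit n y ∧ φ n x = φ n y :=
    fun n x y h => by
      simpa only [o, simpleCode_eq_iff, SimpleFunc.pair_apply, Prod.mk.injEq] using h
  have hE := fun n => (hT n).equivalence
  have hsep : SeparatesSubclasses T r := ⟨hrT _ _ _, hTr _ _ _⟩
  have hor := fun n x y h => (ho n x y h).1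
  refine ⟨vertexCode (fun n => (hT n).enumeration) o, edgeCode (fun n => (hT n).enumeration) o r,
    isPathCoding_vertexCode_edgeCode hE hmono hT0 hsep hor fun x y h =>
      hbit x y fun n => (ho n x y (h n)).2.1, fun n x y => ?_⟩
  exact eq_of_edgeCode_eq (hE _) hor hsep (hφ n) fun x y h =>
    (ho n x y (history_succ_eq_iff.1 h).2.2).2.2

end PathCoding

/-! ### Cohomology to a cocycle with finitely many increments at each stage -/

section Cohomology

variable {X : Type*} [MeasurableSpace X] {T : ℕ → X → X → Prop} {G : Type*} [Group G]
  [MeasurableSpace G] {C : X → X → G}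

/-- Along each `T n`, the cocycle `C` is cohomologous, by `b`, to the quasi-product cocycle with
increments `φ`. -/
def IsCohomologousToQuasiProduct {X G : Type*} [Group G] (T : ℕ → X → X → Prop) (C : X → X → G)
    (φ : ℕ → X → G) (b : X → G) : Prop :=
  ∀ ⦃n x y⦄, T n x y → C x y =
    (b x)⁻¹ * (partialProd (fun k => φ k x) n * (partialProd (fun k => φ k y) n)⁻¹) * b y

theorem IsCohomologousToQuasiProduct.map {X G H : Type*} [Group G] [Group H]
    {T : ℕ → X → X → Prop} {C : X → X → G} {φ : ℕ → X → G} {b : X → G}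
    (h : IsCohomologousToQuasiProduct T C φ b) (F : G →* H) :
    IsCohomologousToQuasiProduct T (fun x y => F (C x y)) (fun k x => F (φ k x))
      (fun x => F (b x)) := fun n x y hxy => by
  simp only [h hxy, map_mul, map_inv, map_partialProd]

theorem partialProd_cocycle_eq (hE : ∀ n, Equivalence (T n)) (hmono : Monotone T) (hT0 : T 0 = Eq)
    (hC : ∀ n, IsBorelCocycle (T n) C) {π : ℕ → X → X} (hπ : ∀ n x, T n x (π n x)) (x : X)
    (n : ℕ) : partialProd (fun k => C (π k x) (π (k + 1) x)) n = C x (π n x) := by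
  induction n with
  | zero =>
    have hx : x = π 0 x := (congrFun₂ hT0 x (π 0 x)).mp (hπ 0 x)
    rw [← hx, (hC 0).apply_self ((hE 0).refl x), partialProd_zero]
  | succ n ih =>
    have hxn : T (n + 1) x (π n x) := hmono n.le_succ _ _ (hπ n x)
    rw [partialProd_succ, ih,
      (hC (n + 1)).mul_eq hxn ((hE (n + 1)).trans ((hE (n + 1)).symm hxn) (hπ (n + 1) x))]

theorem isCohomologousToQuasiProduct_of_tendsto [TopologicalSpace G] [IsTopologicalGroup G]
    [T2Space G] (hmono : Monotone T) (hC : ∀ n, IsBorelCocycle (T n) C) {π : ℕ → X → X}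
    (hπ : ∀ n x, T n x (π n x)) (hπT : ∀ n x y, T n x y → π n x = π n y) {φ : ℕ → X → G}
    (hφ : ∀ n x y, T n x y → φ n x = φ n y) {b : X → G}
    (hb : ∀ x, Tendsto (fun n => partialProd (fun k => φ k x) n * (C x (π n x))⁻¹) atTop
      (𝓝 (b x))) :
    IsCohomologousToQuasiProduct T C φ b := by
  intro n x y hxy
  have hlim := ((hb x).mul_const (C x y)).mul (hb y).inv
  have hconst : ∀ᶠ m in atTop, partialProd (fun k => φ k x) m * (C x (π m x))⁻¹ * C x y *
      (partialProd (fun k => φ k y) m * (C y (π m y))⁻¹)⁻¹ =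
        partialProd (fun k => φ k x) n * (partialProd (fun k => φ k y) n)⁻¹ := by
    filter_upwards [eventually_ge_atTop n] with m hnm
    have hxym : T m x y := hmono hnm _ _ hxy
    rw [← partialProd_mul_inv_eq_of_le (fun k hk => hφ k x y (hmono hk _ _ hxy)) hnm,
      hπT m x y hxym, ← (hC m).mul_eq hxym (hπ m y)]
    group
  rw [← tendsto_nhds_unique hlim (tendsto_const_nhds.congr' (hconst.mono fun _ => Eq.symm))]
  group

theorem exists_simpleFunc_cohomologous [StandardBorelSpace X] [TopologicalSpace G]
    [IsTopologicalGroup G] [T2Space G] [LocallyCompactSpace G] [SecondCountableTopology G]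
    [BorelSpace G] (hT : ∀ n, IsFiniteBorelEquivalence (T n)) (hmono : Monotone T)
    (hT0 : T 0 = Eq) (hC : ∀ n, IsBorelCocycle (T n) C)
    (hK : ∀ n, ∃ K, IsCompact K ∧ ∀ x y, T n x y → C x y ∈ K) :
    ∃ (φ : ℕ → SimpleFunc X G) (b : X → G) (Q : Set G),
      (∀ n x y, T n x y → φ n x = φ n y) ∧ Measurable b ∧ IsCompact Q ∧ (∀ x, b x ∈ Q) ∧
      IsCohomologousToQuasiProduct T C (fun n => φ n) b := by
  choose π hπ hTπ hπT using fun n => exists_measurable_representative (hT n)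
  choose K hK hCK using hK
  obtain ⟨Q, q, hQ, hq⟩ :=
    exists_simpleFunc_forall_tendsto_partialProd_mul_inv fun n => hK (n + 1)
  have hE := fun n => (hT n).equivalence
  have hπsucc : ∀ n x, T (n + 1) (π n x) (π (n + 1) x) := fun n x =>
    (hE _).trans ((hE _).symm (hmono n.le_succ _ _ (hTπ n x))) (hTπ (n + 1) x)
  let a : ℕ → X → G := fun n x => C (π n x) (π (n + 1) x)
  have ha : ∀ n, Measurable (a n) := fun n =>
    (hC (n + 1)).measurable_comp (hπ n) (hπ (n + 1)) (hπsucc n)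
  have haT : ∀ n x y, T n x y → a n x = a n y := fun n x y hxy =>
    congrArg₂ C (hπT n x y hxy) (hπT (n + 1) x y (hmono n.le_succ _ _ hxy))
  choose b hbQ hb using fun x => hq (fun n => a n x) fun n => hCK (n + 1) _ _ (hπsucc n x)
  let φ : ℕ → SimpleFunc X G := fun n => (q n).comp (a n) (ha n)
  have hφT : ∀ n x y, T n x y → φ n x = φ n y := fun n x y hxy => congrArg (q n) (haT n x y hxy)
  have hbm : Measurable b := measurable_of_tendsto_metrizable
    (fun n => (measurable_partialProd (fun k => (φ k).measurable) n).mul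
      (measurable_partialProd ha n).inv) (tendsto_pi_nhds.2 hb)
  refine ⟨φ, b, Q, hφT, hbm, hQ, hbQ, ?_⟩
  simp only [a, partialProd_cocycle_eq hE hmono hT0 hC hTπ] at hb
  exact isCohomologousToQuasiProduct_of_tendsto hmono hC hTπ hπT hφT hb

end Cohomology

/-! ### Markov measures -/

section Markov

theorem measure_univ_eq_of_forall_fiber {X β : Type*} [MeasurableSpace X] [MeasurableSpace β]
    [Countable β] [MeasurableSingletonClass β] {ρ ρ' : Measure X} {w : X → β} (hw : Measurable w)
    (h : ∀ x, ρ (w ⁻¹' {w x}) = ρ' (w ⁻¹' {w x})) : ρ univ = ρ' univ := by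
  have key : ρ.map w = ρ'.map w := Measure.ext_of_singleton fun a => by
    rw [Measure.map_apply hw (measurableSet_singleton a),
      Measure.map_apply hw (measurableSet_singleton a)]
    rcases (w ⁻¹' {a}).eq_empty_or_nonempty with hempty | ⟨x, rfl⟩
    · simp only [hempty, measure_empty]
    · exact h x
  simpa [Measure.map_apply hw] using congrArg (· univ) key

variable {X : Type*} [MeasurableSpace X]

theorem HasBorelEnumeration.exists_measurable_selection {S : X → X → Prop}
    (hS : HasBorelEnumeration S) {D Z : Set X} (hD : MeasurableSet D) (hZ : MeasurableSet Z)
    (hDZ : ∀ y ∈ D, ∃ z ∈ Z, S y z) :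
    ∃ g : X → X, Measurable g ∧ (∀ y, S y (g y)) ∧ MapsTo g D Z := by
  classical
  obtain ⟨γ, hγ, hγS⟩ := hS
  have hhit (y : X) : ∃ j, γ j y ∈ Z ∨ y ∉ D := by
    by_cases hy : y ∈ D
    · obtain ⟨z, hz, hyz⟩ := hDZ y hy
      obtain ⟨j, rfl⟩ := (hγS y z).1 hyz
      exact ⟨j, Or.inl hz⟩
    · exact ⟨0, Or.inr hy⟩
  have hfind : Measurable fun y => Nat.find (hhit y) :=
    measurable_find hhit fun j => (hγ j hZ).union hD.compl
  have hγ' : Measurable fun p : ℕ × X => γ p.1 p.2 := measurable_from_prod_countable_right hγ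
  exact ⟨fun y => γ (Nat.find (hhit y)) y, hγ'.comp (hfind.prodMk measurable_id),
    fun y => (hγS _ _).2 ⟨_, rfl⟩,
    fun y hy => (Nat.find_spec (hhit y)).resolve_right (not_not_intro hy)⟩

/-- The vertex at level `n` of the coded path of a point, together with the `n` edges leading to
it. -/
def pathPrefix (t e : ℕ → SimpleFunc X ℕ) (n : ℕ) (x : X) : ℕ × (Fin n → ℕ) :=
  (t n x, fun k => e k x)

variable {t e : ℕ → SimpleFunc X ℕ} {n : ℕ} {x y : X}

theorem measurable_pathPrefix : Measurable (pathPrefix t e n) :=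
  (t n).measurable.prodMk (measurable_pi_lambda _ fun k => (e k).measurable)

theorem pathPrefix_eq_iff :
    pathPrefix t e n x = pathPrefix t e n y ↔ t n x = t n y ∧ ∀ k < n, e k x = e k y := by
  simp only [pathPrefix, Prod.mk.injEq, funext_iff, Fin.forall_iff]

/-- The cylinder of points whose coded path has the same beginning as that of `x`. -/
def prefixCylinder (t e : ℕ → SimpleFunc X ℕ) (n : ℕ) (x : X) : Set X :=
  pathPrefix t e n ⁻¹' {pathPrefix t e n x}

theorem mem_prefixCylinder :
    y ∈ prefixCylinder t e n x ↔ t n y = t n x ∧ ∀ k < n, e k y = e k x :=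
  pathPrefix_eq_iff

theorem measurableSet_prefixCylinder : MeasurableSet (prefixCylinder t e n x) :=
  measurable_pathPrefix (measurableSet_singleton _)

/-- The Markov property of the coding under `ν`: given the vertex at level `n`, the next edge is
independent of the preceding ones. -/
def IsMarkovCoding (ν : Measure X) (t e : ℕ → SimpleFunc X ℕ) : Prop :=
  ∀ n x, ν (prefixCylinder t e (n + 1) x) * ν (t n ⁻¹' {t n x}) =
    ν (prefixCylinder t e n x) * ν (e n ⁻¹' {e n x})

variable {T : ℕ → X → X → Prop} {ν : Measure X} {Ψ : X → ℝ} {C : Set X} {x' : X}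

theorem IsPathCoding.exists_swap (h : IsPathCoding T t e) (hT : IsFiniteBorelEquivalence (T n))
    (hxx' : t n x' = t n x) (hC : ∀ ⦃y z⦄, T n y z → y ∈ C → z ∈ C) :
    ∃ g : X → X, Measurable g ∧ (∀ y, T n y (g y)) ∧
      InjOn g (prefixCylinder t e n x ∩ C) ∧
      g '' (prefixCylinder t e n x ∩ C) = prefixCylinder t e n x' ∩ C := by
  have hE := hT.equivalence
  have hhit : ∀ y ∈ t n ⁻¹' {t n x}, ∃ z ∈ prefixCylinder t e n x', T n y z := fun y hy => by
    obtain ⟨z, hzy, hz⟩ := h.exists_rel_of_vertex_eq (hxx'.trans (mem_singleton_iff.1 hy).symm)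
    exact ⟨z, mem_prefixCylinder.2 ⟨(h.vertex_eq_of_rel hzy).trans (hy.trans hxx'.symm), hz⟩,
      hE.symm hzy⟩
  obtain ⟨g, hg, hgT, hgx'⟩ := hT.enumeration.exists_measurable_selection
    ((t n).measurableSet_fiber _) measurableSet_prefixCylinder hhit
  refine ⟨g, hg, hgT, fun y hy z hz hyz => ?_, Subset.antisymm ?_ ?_⟩
  · exact h.eq_of_rel (hE.trans (hgT y) (hyz ▸ hE.symm (hgT z))) fun k hk =>
      ((mem_prefixCylinder.1 hy.1).2 k hk).trans ((mem_prefixCylinder.1 hz.1).2 k hk).symm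
  · rintro _ ⟨y, hy, rfl⟩
    exact ⟨hgx' (mem_prefixCylinder.1 hy.1).1, hC (hgT y) hy.2⟩
  · rintro z ⟨hz, hzC⟩
    obtain ⟨hzt, hze⟩ := mem_prefixCylinder.1 hz
    obtain ⟨y, hyz, hye⟩ := h.exists_rel_of_vertex_eq (hxx'.symm.trans hzt.symm)
    have hyt : t n y = t n x := (h.vertex_eq_of_rel hyz).trans (hzt.trans hxx')
    refine ⟨y, ⟨mem_prefixCylinder.2 ⟨hyt, hye⟩, hC (hE.symm hyz) hzC⟩, ?_⟩
    exact h.eq_of_rel (hE.trans (hE.symm (hgT y)) hyz) fun k hk =>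
      ((mem_prefixCylinder.1 (hgx' hyt)).2 k hk).trans (hze k hk).symm

theorem IsPathCoding.measure_prefixCylinder_inter_swap (h : IsPathCoding T t e)
    (hT : IsFiniteBorelEquivalence (T n)) (hν : IsRadonNikodymPotential ν (T n) Ψ)
    (hΨ : ∀ ⦃y z⦄, (∀ k < n, e k y = e k z) → Ψ y = Ψ z) (hxx' : t n x' = t n x)
    (hCm : MeasurableSet C) (hC : ∀ ⦃y z⦄, T n y z → y ∈ C → z ∈ C) :
    ν (prefixCylinder t e n x' ∩ C) =
      ENNReal.ofReal (Real.exp (Ψ x' - Ψ x)) * ν (prefixCylinder t e n x ∩ C) := by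
  obtain ⟨g, hg, hgT, hinj, himage⟩ := h.exists_swap hT hxx' hC
  have hmeas : MeasurableSet (prefixCylinder t e n x ∩ C) := measurableSet_prefixCylinder.inter hCm
  rw [← himage, hν g _ hg hmeas hinj fun y _ => hgT y, ← setLIntegral_const]
  refine setLIntegral_congr_fun hmeas fun y hy => ?_
  have hgy : g y ∈ prefixCylinder t e n x' := (himage.subset (mem_image_of_mem g hy)).1
  rw [hΨ (mem_prefixCylinder.1 hy.1).2, hΨ (mem_prefixCylinder.1 hgy).2]

theorem IsPathCoding.measure_prefixCylinder_inter_mul (h : IsPathCoding T t e)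
    (hT : IsFiniteBorelEquivalence (T n)) (hν : IsRadonNikodymPotential ν (T n) Ψ)
    (hΨ : ∀ ⦃y z⦄, (∀ k < n, e k y = e k z) → Ψ y = Ψ z)
    (hCm : MeasurableSet C) (hC : ∀ ⦃y z⦄, T n y z → y ∈ C → z ∈ C) :
    ν (prefixCylinder t e n x ∩ C) * ν (t n ⁻¹' {t n x}) =
      ν (prefixCylinder t e n x) * ν (t n ⁻¹' {t n x} ∩ C) := by
  set D := t n ⁻¹' {t n x}
  have hfiber (x' : X) :
      (ν (prefixCylinder t e n x ∩ C) • ν.restrict D) (prefixCylinder t e n x') =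
        (ν (prefixCylinder t e n x) • ν.restrict (D ∩ C)) (prefixCylinder t e n x') := by
    simp only [Measure.smul_apply, smul_eq_mul,
      Measure.restrict_apply measurableSet_prefixCylinder, ← inter_assoc]
    by_cases hx' : t n x' = t n x
    · have hsub : prefixCylinder t e n x' ⊆ D := fun y hy => (mem_prefixCylinder.1 hy).1.trans hx'
      have htotal := h.measure_prefixCylinder_inter_swap hT hν hΨ hx' MeasurableSet.univ
        fun _ _ _ _ => mem_univ _
      simp only [inter_univ] at htotal
      rw [inter_eq_left.2 hsub, h.measure_prefixCylinder_inter_swap hT hν hΨ hx' hCm hC, htotal]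
      ring
    · have hdisj : prefixCylinder t e n x' ∩ D = ∅ := eq_empty_of_forall_notMem fun y hy =>
        hx' ((mem_prefixCylinder.1 hy.1).1.symm.trans hy.2)
      simp only [hdisj, empty_inter, measure_empty, mul_zero]
  simpa using measure_univ_eq_of_forall_fiber measurable_pathPrefix hfiber

theorem IsPathCoding.isMarkovCoding (h : IsPathCoding T t e)
    (hT : ∀ n, IsFiniteBorelEquivalence (T n)) {Ψ : ℕ → X → ℝ}
    (hν : ∀ n, IsRadonNikodymPotential ν (T n) (Ψ n))
    (hΨ : ∀ n ⦃y z⦄, (∀ k < n, e k y = e k z) → Ψ n y = Ψ n z) : IsMarkovCoding ν t e := by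
  intro n x
  have hsucc : prefixCylinder t e n x ∩ e n ⁻¹' {e n x} = prefixCylinder t e (n + 1) x := by
    ext y
    simp only [mem_inter_iff, mem_prefixCylinder, mem_preimage, mem_singleton_iff,
      Nat.forall_lt_succ_right]
    exact ⟨fun hy => ⟨h.range_eq hy.2, hy.1.2, hy.2⟩,
      fun hy => ⟨⟨h.source_eq hy.2.2, hy.2.1⟩, hy.2.2⟩⟩
  have hsource : t n ⁻¹' {t n x} ∩ e n ⁻¹' {e n x} = e n ⁻¹' {e n x} :=
    inter_eq_right.2 fun y hy => h.source_eq hy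
  have key := h.measure_prefixCylinder_inter_mul (x := x) (hT n) (hν n) (hΨ n)
    ((e n).measurableSet_fiber (e n x))
    fun y z hyz hy => (h.edge_eq_of_rel hyz).symm.trans hy
  rwa [hsucc, hsource] at key

end Markov

section MarkovModel

variable {X : Type*} [MeasurableSpace X] [StandardBorelSpace X] {μ : Measure X}
  {R : X → X → Prop} {S T : ℕ → X → X → Prop} {t e : ℕ → SimpleFunc X ℕ}

theorem exists_pathCoding_isCohomologousToQuasiProduct [IsFiniteMeasure μ]
    (hS : FiniteBorelExhaustion μ R S) {G : Type*} [Group G] [TopologicalSpace G]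
    [IsTopologicalGroup G] [LocallyCompactSpace G] [SecondCountableTopology G] [T2Space G]
    [MeasurableSpace G] [BorelSpace G] {C : X → X → G} (hC : ∀ n, IsBorelCocycle (S n) C) :
    ∃ (T : ℕ → X → X → Prop) (t e : ℕ → SimpleFunc X ℕ) (f : ℕ → ℕ → G) (b : X → G) (Q : Set G),
      FiniteBorelExhaustion μ R T ∧ (∀ n, T n ≤ S n) ∧ IsPathCoding T t e ∧
      Measurable b ∧ IsCompact Q ∧ (∀ x, b x ∈ Q) ∧
      IsCohomologousToQuasiProduct T C (fun n x => f n (e n x)) b := by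
  obtain ⟨T, hT, hTS, hT0, hcard, hK⟩ := exists_bounded_exhaustion hS hC
  obtain ⟨φ, b, Q, hφ, hb, hQ, hbQ, hcoh⟩ := exists_simpleFunc_cohomologous hT.isFiniteBorel
    hT.monotone hT0 (fun n => (hC n).mono (hTS n)) hK
  obtain ⟨t, e, hcoding, hφe⟩ := exists_pathCoding hT.isFiniteBorel hT.monotone hT0 hcard hφ
  choose f hf using fun n => (Function.factorsThrough_iff (φ n)).1 (hφe n)
  refine ⟨T, t, e, f, b, Q, hT, hTS, hcoding, hb, hQ, hbQ, ?_⟩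
  simp only [hf] at hcoh
  exact hcoh

/-- Tilting by the transfer function turns the logarithmic Radon–Nikodym cocycle into the
quasi-product cocycle itself, whose potential on `T n` only depends on the first `n` edges. -/
theorem IsPathCoding.isMarkovCoding_tilted [NeZero μ] (h : IsPathCoding T t e)
    (hT : ∀ n, IsFiniteBorelEquivalence (T n)) {d : X → X → ℝ}
    (hd : ∀ n, ∃ l, Measurable l ∧ IsRadonNikodymPotential μ (T n) l ∧
      ∀ x y, T n x y → d x y = l x - l y)
    {f : ℕ → ℕ → Multiplicative ℝ} {b : X → Multiplicative ℝ}
    (hcoh : IsCohomologousToQuasiProduct T (fun x y => Multiplicative.ofAdd (d x y))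
      (fun n x => f n (e n x)) b)
    (hb : Measurable fun x => (b x).toAdd) (hint : Integrable (fun x => Real.exp (b x).toAdd) μ) :
    IsMarkovCoding (μ.tilted fun x => (b x).toAdd) t e := by
  refine h.isMarkovCoding hT (Ψ := fun n x => (partialProd (fun k => f k (e k x)) n).toAdd)
    (fun n => ?_) fun n y z hyz => ?_
  · obtain ⟨l, hl, hpot, hdl⟩ := hd n
    refine (hpot.tilted hl hb hint).congr fun x y hxy => ?_
    have key := congrArg Multiplicative.toAdd (hcoh hxy)
    simp only [toAdd_ofAdd, toAdd_mul, toAdd_inv, hdl x y hxy] at key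
    simp only [Pi.add_apply]
    linarith
  · exact congrArg Multiplicative.toAdd (partialProd_congr fun k hk => by rw [hyz k hk])

theorem exists_isMarkovCoding_isCohomologousToQuasiProduct [IsProbabilityMeasure μ]
    (hR : Equivalence R) (hqi : QuasiInvariantRel μ R) (hhyp : HyperfiniteRel μ R) {A : Type*}
    [Group A] [TopologicalSpace A] [IsTopologicalGroup A] [LocallyCompactSpace A]
    [SecondCountableTopology A] [T2Space A] [MeasurableSpace A] [BorelSpace A] {c : X → X → A}
    (hc : IsBorelCocycle R c) :
    ∃ (T : ℕ → X → X → Prop) (t e : ℕ → SimpleFunc X ℕ) (f : ℕ → ℕ → A) (b : X → A)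
      (ν : Measure X), FiniteBorelExhaustion μ R T ∧ IsPathCoding T t e ∧
      IsProbabilityMeasure ν ∧ μ ≪ ν ∧ ν ≪ μ ∧ IsMarkovCoding ν t e ∧ Measurable b ∧
      IsCohomologousToQuasiProduct T c (fun n x => f n (e n x)) b := by
  obtain ⟨S, d, hS, hd⟩ := exists_radonNikodym_cocycle hR hqi hhyp
  have hC (n : ℕ) : IsBorelCocycle (S n) fun x y => (c x y, Multiplicative.ofAdd (d x y)) := by
    obtain ⟨l, hl, -, hdl⟩ := hd n
    exact (hc.mono (hS.le n)).prod
      (isBorelCocycle_ofAdd_of_eq_sub (hS.isFiniteBorel n).equivalence hl hdl)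
  obtain ⟨T, t, e, f, b, Q, hT, hTS, hcoding, hb, hQ, hbQ, hcoh⟩ :=
    exists_pathCoding_isCohomologousToQuasiProduct hS hC
  have hcohA := hcoh.map (MonoidHom.fst A (Multiplicative ℝ))
  have hcohd := hcoh.map (MonoidHom.snd A (Multiplicative ℝ))
  simp only [MonoidHom.coe_fst, MonoidHom.coe_snd] at hcohA hcohd
  let s : X → ℝ := fun x => (b x).2.toAdd
  have hsnd : Continuous fun g : A × Multiplicative ℝ => g.2.toAdd :=
    continuous_toAdd.comp continuous_snd
  have hs : Measurable s := hsnd.measurable.comp hb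
  obtain ⟨L, hL⟩ := (hQ.image hsnd).bddAbove
  have hint : Integrable (fun x => Real.exp (s x)) μ :=
    Integrable.of_bound hs.exp.aestronglyMeasurable (Real.exp L) <| ae_of_all _ fun x => by
      rw [Real.norm_of_nonneg (Real.exp_pos _).le]
      exact Real.exp_le_exp.2 (hL ⟨b x, hbQ x, rfl⟩)
  refine ⟨T, t, e, fun n a => (f n a).1, fun x => (b x).1, μ.tilted s, hT, hcoding,
    isProbabilityMeasure_tilted hint, absolutelyContinuous_tilted hint,
    tilted_absolutelyContinuous μ s, ?_, measurable_fst.comp hb, hcohA⟩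
  refine hcoding.isMarkovCoding_tilted (f := fun n a => (f n a).2) hT.isFiniteBorel (fun n => ?_)
    hcohd hs hint
  obtain ⟨l, hl, hpot, hdl⟩ := hd n
  exact ⟨l, hl, hpot.mono (hTS n), fun x y hxy => hdl x y (hTS n x y hxy)⟩

end MarkovModel

/-! ### The Bratteli diagram of a path coding -/

namespace BratteliDiagram

variable {B : BratteliDiagram}

instance : T2Space B.PathSpace :=
  inferInstanceAs (T2Space {x : ∀ n, B.E n // ∀ n, B.rng n (x n) = B.src (n + 1) (x (n + 1))})

instance : SecondCountableTopology B.PathSpace := by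
  have := B.finE
  exact TopologicalSpace.Subtype.secondCountableTopology
    {x : ∀ n, B.E n | ∀ n, B.rng n (x n) = B.src (n + 1) (x (n + 1))}

theorem measurable_of_measurableSet_edge_eq {X : Type*} [MeasurableSpace X] {g : X → B.PathSpace}
    (hg : ∀ n a, MeasurableSet {x | (g x).1 n = a}) : Measurable g := by
  have := B.finE
  let _ : ∀ n, MeasurableSpace (B.E n) := fun _ => ⊤
  have : ∀ n, BorelSpace (B.E n) := fun _ => ⟨borel_eq_top_of_discrete.symm⟩
  have hcomap : borel B.PathSpace = MeasurableSpace.comap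
      (Subtype.val : {x : ∀ n, B.E n // ∀ n, B.rng n (x n) = B.src (n + 1) (x (n + 1))} →
        ∀ n, B.E n) MeasurableSpace.pi := by
    rw [BorelSpace.measurable_eq (α := ∀ n, B.E n)]
    exact borel_comap
  change @Measurable _ _ _ (borel B.PathSpace) g
  rw [hcomap]
  exact measurable_comap_iff.2
    (measurable_pi_lambda _ fun n => measurable_to_countable' fun a => hg n a)

theorem measurableSet_cyl (x : B.PathSpace) (n : ℕ) : MeasurableSet (B.cyl x n) := by
  have hcyl : B.cyl x n = ⋂ k ∈ Iio n, {y | y.1 k = x.1 k} := by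
    ext y
    simp only [cyl, mem_ofPred_eq, mem_iInter, mem_Iio]
  have hcoord (k : ℕ) : Continuous fun y : B.PathSpace => y.1 k :=
    (continuous_apply k).comp continuous_subtype_val
  rw [hcyl]
  exact MeasurableSet.biInter (to_countable _) fun k _ =>
    ((isOpen_discrete {x.1 k}).preimage (hcoord k)).measurableSet

end BratteliDiagram

section EssentialValues

variable {X : Type*} [MeasurableSpace X] {ν : Measure X} {u : SimpleFunc X ℕ}

/-- The values taken by `u` on a set of positive measure. -/
@[ext]
structure EssentialValue (ν : Measure X) (u : SimpleFunc X ℕ) : Type where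
  val : ℕ
  measure_fiber_ne_zero : ν (u ⁻¹' {val}) ≠ 0

theorem EssentialValue.exists_apply_eq (a : EssentialValue ν u) : ∃ x, u x = a.val :=
  nonempty_of_measure_ne_zero a.measure_fiber_ne_zero

instance : Finite (EssentialValue ν u) :=
  have := u.finite_range.to_subtype
  Finite.of_injective (fun a : EssentialValue ν u => (⟨a.val, a.exists_apply_eq⟩ : range u))
    fun _ _ haa' => EssentialValue.ext (congrArg Subtype.val haa')

theorem ae_measure_fiber_ne_zero : ∀ᵐ x ∂ν, ν (u ⁻¹' {u x}) ≠ 0 := by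
  have hnull : ν (⋃ a ∈ {a | ν (u ⁻¹' {a}) = 0}, u ⁻¹' {a}) = 0 :=
    (measure_biUnion_null_iff (to_countable _)).2 fun a ha => ha
  filter_upwards [measure_eq_zero_iff_ae_notMem.1 hnull] with x hx h0
  exact hx (mem_biUnion h0 rfl)

theorem finsum_measureReal_fiber [IsFiniteMeasure ν] {D : Set X} {P : Set (EssentialValue ν u)}
    (hD : ∀ a x, u x = a.val → (x ∈ D ↔ a ∈ P)) :
    ∑ᶠ a ∈ P, ν.real (u ⁻¹' {a.val}) = ν.real D := by
  rw [finsum_mem_eq_finite_toFinset_sum _ (toFinite P), ← measureReal_biUnion_finset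
    (fun a _ a' _ haa' => disjoint_left.2 fun x hx hx' =>
      haa' (EssentialValue.ext (hx.symm.trans hx')))
    fun a _ => u.measurableSet_fiber a.val]
  refine measureReal_congr ?_
  filter_upwards [ae_measure_fiber_ne_zero (ν := ν) (u := u)] with x hx
  refine propext ⟨fun hxP => ?_, fun hxD => ?_⟩
  · obtain ⟨a, ha, hxa⟩ := mem_iUnion₂.1 hxP
    exact (hD a x hxa).2 ((toFinite P).mem_toFinset.1 ha)
  · exact mem_iUnion₂.2
      ⟨⟨u x, hx⟩, (toFinite P).mem_toFinset.2 ((hD ⟨u x, hx⟩ x rfl).1 hxD), rfl⟩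

end EssentialValues

section CodedDiagram

variable {X : Type*} [MeasurableSpace X] {ν : Measure X} {T : ℕ → X → X → Prop}
  {t e : ℕ → SimpleFunc X ℕ} {n : ℕ} {x y : X}

/-- The points all of whose coding edges have positive measure. -/
def essentialPoints (ν : Measure X) (e : ℕ → SimpleFunc X ℕ) : Set X :=
  {x | ∀ n, ν (e n ⁻¹' {e n x}) ≠ 0}

theorem essentialPoints_mem_ae : essentialPoints ν e ∈ ae ν :=
  ae_all_iff.2 fun _ => ae_measure_fiber_ne_zero

theorem measurableSet_essentialPoints : MeasurableSet (essentialPoints ν e) :=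
  measurableSet_setOfPred.2 <| Measurable.forall fun n =>
    measurableSet_setOfPred.1 <|
      (e n).measurable (to_countable {a | ν (e n ⁻¹' {a}) ≠ 0}).measurableSet

open Classical in
/-- A retraction of `X` onto the essential points, sending all other points to a fixed one. -/
noncomputable def essentialRetract (ν : Measure X) [NeZero ν] (e : ℕ → SimpleFunc X ℕ) (x : X) :
    X :=
  if x ∈ essentialPoints ν e then x
  else (ae ν).nonempty_of_mem (essentialPoints_mem_ae (e := e)) |>.some

theorem measurable_essentialRetract [NeZero ν] : Measurable (essentialRetract ν e) :=
  Measurable.ite measurableSet_essentialPoints measurable_id measurable_const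

theorem essentialRetract_mem [NeZero ν] : essentialRetract ν e x ∈ essentialPoints ν e := by
  unfold essentialRetract
  split_ifs with hx
  exacts [hx, Nonempty.some_mem _]

theorem essentialRetract_of_mem [NeZero ν] (hx : x ∈ essentialPoints ν e) :
    essentialRetract ν e x = x :=
  if_pos hx

namespace IsPathCoding

theorem measure_vertex_ne_zero (h : IsPathCoding T t e) (hx : ν (e n ⁻¹' {e n x}) ≠ 0) :
    ν (t n ⁻¹' {t n x}) ≠ 0 :=
  fun h0 => hx (measure_mono_null (fun _ hy => h.source_eq hy) h0)

theorem measure_vertex_succ_ne_zero (h : IsPathCoding T t e) (hx : ν (e n ⁻¹' {e n x}) ≠ 0) :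
    ν (t (n + 1) ⁻¹' {t (n + 1) x}) ≠ 0 :=
  fun h0 => hx (measure_mono_null (fun _ hy => h.range_eq hy) h0)

variable (ν) in
/-- The Bratteli diagram whose vertices and edges are the codes taken with positive measure; the
ends of an edge are read off at any point coded by it. -/
noncomputable abbrev diagram [NeZero ν] (h : IsPathCoding T t e) : BratteliDiagram where
  V n := EssentialValue ν (t n)
  E n := EssentialValue ν (e n)
  src n a := ⟨t n a.exists_apply_eq.choose,
    h.measure_vertex_ne_zero (by
      rw [a.exists_apply_eq.choose_spec]; exact a.measure_fiber_ne_zero)⟩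
  rng n a := ⟨t (n + 1) a.exists_apply_eq.choose,
    h.measure_vertex_succ_ne_zero (by
      rw [a.exists_apply_eq.choose_spec]; exact a.measure_fiber_ne_zero)⟩
  finV _ := inferInstance
  finE _ := inferInstance
  nonemptyV n := by
    obtain ⟨x, hx⟩ := (ae_measure_fiber_ne_zero (ν := ν) (u := t n)).exists
    exact ⟨⟨t n x, hx⟩⟩
  emits n v := by
    have hv : ∃ᵐ x ∂ν, t n x = v.val := frequently_ae_iff.2 v.measure_fiber_ne_zero
    obtain ⟨x, hxv, hx⟩ := (hv.and_eventually (ae_measure_fiber_ne_zero (u := e n))).exists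
    let a : EssentialValue ν (e n) := ⟨e n x, hx⟩
    exact ⟨a, EssentialValue.ext ((h.source_eq a.exists_apply_eq.choose_spec).trans hxv)⟩

variable [NeZero ν] (h : IsPathCoding T t e)

theorem vertex_eq_src {a : (h.diagram ν).E n} (hx : e n x = a.val) :
    t n x = ((h.diagram ν).src n a).val :=
  h.source_eq (hx.trans a.exists_apply_eq.choose_spec.symm)

theorem vertex_eq_rng {a : (h.diagram ν).E n} (hx : e n x = a.val) :
    t (n + 1) x = ((h.diagram ν).rng n a).val :=
  h.range_eq (hx.trans a.exists_apply_eq.choose_spec.symm)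

variable (ν) in
/-- The conditional probability of an edge given its source. -/
noncomputable def transition (n : ℕ) (a : (h.diagram ν).E n) : ℝ :=
  ν.real (e n ⁻¹' {a.val}) / ν.real (t n ⁻¹' {((h.diagram ν).src n a).val})

variable (ν) in
/-- The distribution of the initial vertex. -/
noncomputable def initial (v : (h.diagram ν).V 0) : ℝ :=
  ν.real (t 0 ⁻¹' {v.val})

theorem measureReal_vertex_pos [IsFiniteMeasure ν] (v : (h.diagram ν).V n) :
    0 < ν.real (t n ⁻¹' {v.val}) :=
  ENNReal.toReal_pos v.measure_fiber_ne_zero (measure_ne_top _ _)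

theorem transition_pos [IsFiniteMeasure ν] (n : ℕ) (a : (h.diagram ν).E n) :
    0 < h.transition ν n a :=
  div_pos (ENNReal.toReal_pos a.measure_fiber_ne_zero (measure_ne_top _ _))
    (h.measureReal_vertex_pos _)

theorem finsum_transition [IsFiniteMeasure ν] (n : ℕ) (v : (h.diagram ν).V n) :
    ∑ᶠ a ∈ {a : (h.diagram ν).E n | (h.diagram ν).src n a = v}, h.transition ν n a = 1 := by
  calc ∑ᶠ a ∈ {a : (h.diagram ν).E n | (h.diagram ν).src n a = v}, h.transition ν n a
    _ = ∑ᶠ a ∈ {a : (h.diagram ν).E n | (h.diagram ν).src n a = v},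
        (ν.real (t n ⁻¹' {v.val}))⁻¹ * ν.real (e n ⁻¹' {a.val}) :=
      finsum_mem_congr rfl fun a ha => by
        rw [transition, show (h.diagram ν).src n a = v from ha, inv_mul_eq_div]
    _ = (ν.real (t n ⁻¹' {v.val}))⁻¹ * ν.real (t n ⁻¹' {v.val}) := by
      rw [← mul_finsum_mem, finsum_measureReal_fiber fun a x hxa => ?_]
      rw [mem_preimage, h.vertex_eq_src hxa, mem_singleton_iff]
      exact EssentialValue.ext_iff.symm
    _ = 1 := inv_mul_cancel₀ (h.measureReal_vertex_pos v).ne'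

theorem initial_pos [IsFiniteMeasure ν] (v : (h.diagram ν).V 0) : 0 < h.initial ν v :=
  h.measureReal_vertex_pos v

theorem finsum_initial [IsProbabilityMeasure ν] : ∑ᶠ v : (h.diagram ν).V 0, h.initial ν v = 1 := by
  rw [← finsum_mem_univ, ← probReal_univ (μ := ν)]
  exact finsum_measureReal_fiber fun _ _ _ => Iff.rfl

theorem exists_point_of_path (p : (h.diagram ν).PathSpace) (n : ℕ) :
    ∃ y, t n y = ((h.diagram ν).src n (p.1 n)).val ∧ ∀ k < n, e k y = (p.1 k).val := by
  induction n with
  | zero => exact ⟨_, rfl, fun _ hk => absurd hk (Nat.not_lt_zero _)⟩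
  | succ n ih =>
    obtain ⟨y, hyt, hye⟩ := ih
    obtain ⟨z, hz⟩ := (p.1 n).exists_apply_eq
    obtain ⟨w, hwz, hwe⟩ := h.exists_rel_of_vertex_eq (hyt.trans (h.vertex_eq_src hz).symm)
    have hwn : e n w = (p.1 n).val := (h.edge_eq_of_rel hwz).trans hz
    exact ⟨w, (h.vertex_eq_rng hwn).trans (congrArg EssentialValue.val (p.2 n)),
      Nat.forall_lt_succ_right.2 ⟨fun k hk => (hwe k hk).trans (hye k hk), hwn⟩⟩

theorem measureReal_prefixCylinder [IsFiniteMeasure ν] (hmarkov : IsMarkovCoding ν t e)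
    (p : (h.diagram ν).PathSpace) (hyt : t n y = ((h.diagram ν).src n (p.1 n)).val)
    (hye : ∀ k < n, e k y = (p.1 k).val) :
    ν.real (prefixCylinder t e n y) =
      h.initial ν ((h.diagram ν).src 0 (p.1 0)) *
        ∏ k ∈ Finset.range n, h.transition ν k (p.1 k) := by
  induction n with
  | zero =>
    rw [Finset.prod_range_zero, mul_one, initial, ← hyt]
    congr 1
    ext z
    simp [mem_prefixCylinder]
  | succ n ih =>
    obtain ⟨hye, hyn⟩ := Nat.forall_lt_succ_right.1 hye
    have hyt' := h.vertex_eq_src hyn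
    have key := congrArg ENNReal.toReal (hmarkov n y)
    rw [ENNReal.toReal_mul, ENNReal.toReal_mul, hyt', hyn] at key
    rw [Finset.prod_range_succ, ← mul_assoc, ← ih hyt' hye, transition, mul_div_assoc',
      eq_div_iff (h.measureReal_vertex_pos _).ne']
    exact key

variable (ν) in
/-- The map from points to paths; points that are not essential are first retracted. -/
noncomputable def codeMap (x : X) : (h.diagram ν).PathSpace :=
  ⟨fun n => ⟨e n (essentialRetract ν e x), essentialRetract_mem n⟩, fun _ =>
    EssentialValue.ext ((h.vertex_eq_rng rfl).symm.trans (h.vertex_eq_src rfl))⟩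

theorem measurable_codeMap : Measurable (h.codeMap ν) := by
  refine BratteliDiagram.measurable_of_measurableSet_edge_eq fun n a => ?_
  have hedge : {x | (h.codeMap ν x).1 n = a} = essentialRetract ν e ⁻¹' (e n ⁻¹' {a.val}) := by
    ext x
    exact EssentialValue.ext_iff
  rw [hedge]
  exact measurable_essentialRetract ((e n).measurableSet_fiber a.val)

theorem codeMap_edge (hx : x ∈ essentialPoints ν e) : ((h.codeMap ν x).1 n).val = e n x :=
  congrArg (e n) (essentialRetract_of_mem hx)

theorem codeMap_edge_eq_iff (hx : x ∈ essentialPoints ν e) (hy : y ∈ essentialPoints ν e) :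
    (h.codeMap ν x).1 n = (h.codeMap ν y).1 n ↔ e n x = e n y := by
  rw [← h.codeMap_edge hx, ← h.codeMap_edge hy]
  exact EssentialValue.ext_iff

theorem injOn_codeMap : InjOn (h.codeMap ν) (essentialPoints ν e) := fun _ hx _ hy hxy =>
  h.injective fun n => (h.codeMap_edge_eq_iff hx hy).1 (by rw [hxy])

theorem rel_iff_codeMap_edge_eq (hx : x ∈ essentialPoints ν e) (hy : y ∈ essentialPoints ν e) :
    T n x y ↔ ∀ k ≥ n, (h.codeMap ν x).1 k = (h.codeMap ν y).1 k := by
  simp only [h.rel_iff, h.codeMap_edge_eq_iff hx hy]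

theorem map_codeMap_cyl [IsFiniteMeasure ν] (hmarkov : IsMarkovCoding ν t e)
    (p : (h.diagram ν).PathSpace) (n : ℕ) :
    ν.map (h.codeMap ν) ((h.diagram ν).cyl p (n + 1)) =
      ENNReal.ofReal (h.initial ν ((h.diagram ν).src 0 (p.1 0)) *
        ∏ k ∈ Finset.range (n + 1), h.transition ν k (p.1 k)) := by
  obtain ⟨y, hyt, hye⟩ := h.exists_point_of_path p (n + 1)
  rw [Measure.map_apply h.measurable_codeMap (BratteliDiagram.measurableSet_cyl p (n + 1)),
    ← h.measureReal_prefixCylinder hmarkov p hyt hye, ofReal_measureReal]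
  refine measure_congr ?_
  filter_upwards [essentialPoints_mem_ae (ν := ν) (e := e)] with x hx
  have hedge (k : ℕ) (hk : k < n + 1) : (h.codeMap ν x).1 k = p.1 k ↔ e k x = e k y := by
    rw [← h.codeMap_edge hx, hye k hk]
    exact EssentialValue.ext_iff
  refine propext ⟨fun hxp => mem_prefixCylinder.2 ?_, fun hxy k hk => ?_⟩
  · have hxy (k : ℕ) (hk : k < n + 1) : e k x = e k y := (hedge k hk).1 (hxp k hk)
    exact ⟨h.range_eq (hxy n n.lt_succ_self), hxy⟩
  · exact (hedge k hk).2 ((mem_prefixCylinder.1 hxy).2 k hk)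

end IsPathCoding

end CodedDiagram

theorem exists_measurable_comp_eqOn {X Y Z : Type*} [MeasurableSpace X] [StandardBorelSpace X]
    [MeasurableSpace Y] [MeasurableSpace.CountablySeparated Y] [MeasurableSpace Z] [Nonempty Z]
    {θ : X → Y} {s : Set X} (hs : MeasurableSet s) (hθ : Measurable θ) (hinj : InjOn θ s)
    {b : X → Z} (hb : Measurable b) : ∃ b' : Y → Z, Measurable b' ∧ EqOn (b' ∘ θ) b s := by
  have := hs.standardBorel
  have hembed : MeasurableEmbedding fun x : s => θ x :=
    (hθ.comp measurable_subtype_coe).measurableEmbedding (injOn_iff_injective.1 hinj)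
  obtain ⟨b', hb', hbθ⟩ := hembed.exists_measurable_extend (hb.comp measurable_subtype_coe)
    fun _ => inferInstance
  exact ⟨b', hb', fun x hx => congrFun hbθ ⟨x, hx⟩⟩

theorem FiniteBorelExhaustion.exists_measurableSet_rel_iff {X : Type*} [MeasurableSpace X]
    {μ : Measure X} {R : X → X → Prop} {T : ℕ → X → X → Prop} (hT : FiniteBorelExhaustion μ R T)
    {Z : Set X} (hZ : Z ∈ ae μ) :
    ∃ X₀ ⊆ Z, MeasurableSet X₀ ∧ X₀ ∈ ae μ ∧ ∀ x ∈ X₀, ∀ y ∈ X₀, R x y ↔ ∃ n, T n x y := by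
  obtain ⟨W, hW, hWR⟩ := hT.exhausts
  obtain ⟨X₀, hX₀, hX₀m, hX₀ZW⟩ := Filter.IsMeasurablyGenerated.exists_measurable_subset
    (inter_mem hZ hW)
  exact ⟨X₀, hX₀ZW.trans inter_subset_left, hX₀m, hX₀, fun x hx y hy =>
    ⟨hWR x (hX₀ZW hx).2 y (hX₀ZW hy).2, fun ⟨n, hn⟩ => hT.le n x y hn⟩⟩

end

/-- **The model theorem for Borel cocycles on hyperfinite equivalence relations.**
Given a hyperfinite measured equivalence relation `(X, R, μ)` (with `μ` a quasi-invariant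
probability measure on a standard Borel space), a locally compact second countable
Hausdorff group `A` and a Borel cocycle `c : R → A`, there exist a Bratteli diagram with
path space `X̄` and tail equivalence relation `R̄`, a Markov measure `μ̄` on `X̄`
(given by a transition probability `p` and an initial distribution `μ₀`), an isomorphism
`θ` between conull sets carrying `(R, μ)` to `(R̄, μ̄)`, a labelling `f : E → A` with
quasi-product cocycle `c̄`, and a Borel map `b : X̄ → A` such that
`c (x, y) = b(θ x)⁻¹ · c̄(θ x, θ y) · b(θ y)` on `R`, i.e. `θ` carries `c` into a
cocycle cohomologous to the quasi-product cocycle `c̄`. -/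
theorem borel_cocycle_model_quasi_product
    {X : Type*} [MeasurableSpace X] [StandardBorelSpace X]
    (μ : Measure X) (hμ : IsProbabilityMeasure μ)
    (R : X → X → Prop) (hR : Equivalence R)
    (hgraph : MeasurableSet {p : X × X | R p.1 p.2})
    (hcount : ∀ x, {y | R x y}.Countable)
    (hqi : QuasiInvariantRel μ R)
    (hhyp : HyperfiniteRel μ R)
    {A : Type*} [Group A] [TopologicalSpace A] [IsTopologicalGroup A]
    [LocallyCompactSpace A] [SecondCountableTopology A] [T2Space A]
    [MeasurableSpace A] [BorelSpace A]
    (c : X → X → A)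
    (hcoc : ∀ x y z, R x y → R y z → c x y * c y z = c x z)
    (hmeas : Measurable (Set.restrict {p : X × X | R p.1 p.2}
      (fun p : X × X => c p.1 p.2))) :
    ∃ (B : BratteliDiagram) (p : ∀ n, B.E n → ℝ) (μ0 : B.V 0 → ℝ)
      (μb : Measure B.PathSpace) (X₀ : Set X) (Xb₀ : Set B.PathSpace)
      (θ : X → B.PathSpace) (f : ∀ n, B.E n → A) (b : B.PathSpace → A),
      (∀ n e, 0 < p n e) ∧
      (∀ n (v : B.V n), ∑ᶠ e ∈ {e : B.E n | B.src n e = v}, p n e = 1) ∧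
      (∀ v, 0 < μ0 v) ∧ (∑ᶠ v : B.V 0, μ0 v = 1) ∧
      IsProbabilityMeasure μb ∧
      (∀ (x : B.PathSpace) (n : ℕ), μb (B.cyl x (n + 1)) =
        ENNReal.ofReal (μ0 (B.src 0 (x.1 0)) * ∏ k ∈ Finset.range (n + 1), p k (x.1 k))) ∧
      MeasurableSet X₀ ∧ μ X₀ᶜ = 0 ∧ MeasurableSet Xb₀ ∧ μb Xb₀ᶜ = 0 ∧
      Measurable θ ∧ Set.InjOn θ X₀ ∧ θ '' X₀ = Xb₀ ∧
      (∀ Bs : Set B.PathSpace, MeasurableSet Bs → (μ (θ ⁻¹' Bs) = 0 ↔ μb Bs = 0)) ∧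
      (∀ x ∈ X₀, ∀ y ∈ X₀, (R x y ↔ B.Tail (θ x) (θ y))) ∧
      Measurable b ∧
      (∀ x ∈ X₀, ∀ y ∈ X₀, R x y → ∀ N : ℕ,
        (∀ k ≥ N, (θ x).1 k = (θ y).1 k) →
        c x y = (b (θ x))⁻¹ *
          (((List.range N).map fun k => f k ((θ x).1 k)).prod *
            (((List.range N).map fun k => f k ((θ y).1 k)).prod)⁻¹) * b (θ y)) := by
  obtain ⟨T, t, e, f, b, ν, hT, h, _, hμν, hνμ, hmarkov, hb, hcoh⟩ :=
    exists_isMarkovCoding_isCohomologousToQuasiProduct hR hqi hhyp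
      (isBorelCocycle_of_measurable_restrict hcoc hmeas)
  obtain ⟨X₀, hX₀ess, hX₀, hX₀μ, hRT⟩ :=
    hT.exists_measurableSet_rel_iff (hμν.ae_le essentialPoints_mem_ae)
  have hθ : Measurable (h.codeMap ν) := h.measurable_codeMap
  have hinj : Set.InjOn (h.codeMap ν) X₀ := h.injOn_codeMap.mono hX₀ess
  have himage : MeasurableSet (h.codeMap ν '' X₀) := hX₀.image_of_measurable_injOn hθ hinj
  obtain ⟨b', hb', hb'b⟩ := exists_measurable_comp_eqOn hX₀ hθ hinj hb
  refine ⟨h.diagram ν, h.transition ν, h.initial ν, ν.map (h.codeMap ν), X₀, h.codeMap ν '' X₀,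
    h.codeMap ν, fun n a => f n a.val, b', h.transition_pos, h.finsum_transition, h.initial_pos,
    h.finsum_initial, Measure.isProbabilityMeasure_map hθ.aemeasurable,
    h.map_codeMap_cyl hmarkov, hX₀, hX₀μ, himage, ?_, hθ, hinj, rfl, fun Y hY => ?_,
    fun x hx y hy => ?_, hb', fun x hx y hy _ N hN => ?_⟩
  · exact (mem_ae_map_iff hθ.aemeasurable himage).2
      (Filter.mem_of_superset (hνμ.ae_le hX₀μ) (Set.subset_preimage_image _ _))
  · rw [Measure.map_apply hθ hY]
    exact ⟨fun h0 => hνμ h0, fun h0 => hμν h0⟩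
  · rw [hRT x hx y hy]
    exact exists_congr fun N => h.rel_iff_codeMap_edge_eq (hX₀ess hx) (hX₀ess hy)
  · simp only [h.codeMap_edge (hX₀ess hx), h.codeMap_edge (hX₀ess hy),
      show b' (h.codeMap ν x) = b x from hb'b hx, show b' (h.codeMap ν y) = b y from hb'b hy]
    exact hcoh ((h.rel_iff_codeMap_edge_eq (hX₀ess hx) (hX₀ess hy)).2 hN)
end

section
/- Let X and Y be compact Hausdorff totally disconnected spaces and let π : X → Y be a surjective local homeomorphism. Then for every finite partition Q of X into clopen sets there exists a finite partition P of X into clopen sets refining Q such that π is injective on each element of P and, for all ω, ω' ∈ P, the sets π(ω) and π(ω') are either equal or disjoint. -/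
/-!
Cover `X` by finitely many clopen sets on which `π` is injective and which lie in members of `Q`,
and let `f x` record which of these sets contain `x`. Label `y : Y` by the set of values of `f` on
the fibre of `π` over `y`; this label is locally constant because `π` is open and closed. The
required partition is into the level sets of `x ↦ (f x, label of π x)`: the image of such a level
set is a full level set of the label, since a label containing the value `a` is only carried by
points having a preimage at which `f` equals `a`.
-/

open Set TopologicalSpace

open scoped Topology

section FiberValues

variable {X Y α : Type*} {π : X → Y} {f : X → α}

/-- The set of values that `f` takes on the fibre of `π` over `y`. Two points of `Y` with the same
`fiberValues` cannot be told apart by the images under `π` of the level sets of `f`. -/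
def fiberValues (π : X → Y) (f : X → α) (y : Y) : Set α :=
  f '' (π ⁻¹' {y})

/-- The map whose level sets are the level sets of `f`, cut along the preimages under `π` of the
level sets of `fiberValues π f`. -/
def fiberRefinement (π : X → Y) (f : X → α) (x : X) : α × Set α :=
  (f x, fiberValues π f (π x))

theorem mem_fiberValues_iff_mem_image {y : Y} {a : α} :
    a ∈ fiberValues π f y ↔ y ∈ π '' {x | f x = a} :=
  exists_congr fun _ => and_comm

theorem image_setOf_fiberRefinement_eq (x : X) :
    π '' {z | fiberRefinement π f z = fiberRefinement π f x} =
      {y | fiberValues π f y = fiberValues π f (π x)} := by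
  ext y
  constructor
  · rintro ⟨z, hz, rfl⟩
    exact congrArg Prod.snd hz
  · intro (hy : fiberValues π f y = fiberValues π f (π x))
    have hfx : f x ∈ fiberValues π f y := hy ▸ mem_image_of_mem f rfl
    obtain ⟨z, rfl, hz⟩ := hfx
    exact ⟨z, Prod.ext hz hy, rfl⟩

theorem image_eq_or_disjoint_of_mem_classes_ker_fiberRefinement {p p' : Set X}
    (hp : p ∈ (Setoid.ker (fiberRefinement π f)).classes)
    (hp' : p' ∈ (Setoid.ker (fiberRefinement π f)).classes) :
    π '' p = π '' p' ∨ Disjoint (π '' p) (π '' p') := by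
  obtain ⟨x, rfl⟩ := hp
  obtain ⟨x', rfl⟩ := hp'
  simp only [Setoid.ker_def, image_setOf_fiberRefinement_eq]
  by_cases hxx' : fiberValues π f (π x) = fiberValues π f (π x')
  · exact .inl (by rw [hxx'])
  · exact .inr (disjoint_left.2 fun _ hy hy' => hxx' (hy.symm.trans hy'))

theorem exists_subset_setOf_eq_of_mem_classes_ker_fiberRefinement {p : Set X}
    (hp : p ∈ (Setoid.ker (fiberRefinement π f)).classes) : ∃ x, p ⊆ {z | f z = f x} := by
  obtain ⟨x, rfl⟩ := hp
  exact ⟨x, fun _ hz => congrArg Prod.fst hz⟩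

end FiberValues

section LocallyConstant

variable {X Y α ι : Type*} [TopologicalSpace X] [TopologicalSpace Y] {π : X → Y} {f : X → α}

theorem isLocallyConstant_setOf_mem_of_isClopen [Finite ι] {s : ι → Set X}
    (hs : ∀ i, IsClopen (s i)) : IsLocallyConstant fun x => {i | x ∈ s i} := by
  refine (IsLocallyConstant.iff_eventually_eq _).2 fun x => ?_
  have mem_iff_mem : ∀ᶠ z in 𝓝 x, ∀ i, z ∈ s i ↔ x ∈ s i := by
    refine Filter.eventually_all.2 fun i => ?_
    by_cases hx : x ∈ s i
    · filter_upwards [(hs i).isOpen.mem_nhds hx] with z hz using iff_of_true hz hx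
    · filter_upwards [(hs i).compl.isOpen.mem_nhds hx] with z hz using iff_of_false hz hx
  exact mem_iff_mem.mono fun _ hz => Set.ext hz

theorem isLocallyConstant_fiberValues [Finite α] (hopen : IsOpenMap π) (hclosed : IsClosedMap π)
    (hf : IsLocallyConstant f) : IsLocallyConstant (fiberValues π f) := by
  have isClopen_image (a : α) : IsClopen (π '' {x | f x = a}) :=
    ⟨hclosed _ (hf.isClosed_fiber a), hopen _ (hf.isOpen_fiber a)⟩
  have fiberValues_eq : fiberValues π f = fun y => {a | y ∈ π '' {x | f x = a}} :=
    funext fun _ => Set.ext fun _ => mem_fiberValues_iff_mem_image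
  exact fiberValues_eq ▸ isLocallyConstant_setOf_mem_of_isClopen isClopen_image

theorem isLocallyConstant_fiberRefinement [Finite α] (hcont : Continuous π) (hopen : IsOpenMap π)
    (hclosed : IsClosedMap π) (hf : IsLocallyConstant f) :
    IsLocallyConstant (fiberRefinement π f) :=
  hf.prodMk ((isLocallyConstant_fiberValues hopen hclosed hf).comp_continuous hcont)

theorem isClopen_of_mem_classes_ker (hf : IsLocallyConstant f) {p : Set X}
    (hp : p ∈ (Setoid.ker f).classes) : IsClopen p := by
  obtain ⟨x, rfl⟩ := hp
  exact hf.isClopen_fiber (f x)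

theorem exists_isLocallyConstant_setOf_eq_subset [CompactSpace X] [T2Space X]
    [TotallyDisconnectedSpace X] {U : ι → Opens X} (hU : IsOpenCover U) :
    ∃ (n : ℕ) (f : X → Set (Fin n)), IsLocallyConstant f ∧
      ∀ x, ∃ i, {z | f z = f x} ⊆ U i := by
  obtain ⟨n, V, hVU, hV⟩ := hU.exists_finite_clopen_cover
  refine ⟨n, fun x => {j | x ∈ V j},
    isLocallyConstant_setOf_mem_of_isClopen fun j => (V j).isClopen, fun x => ?_⟩
  obtain ⟨j, hxj⟩ := mem_iUnion.1 (hV (mem_univ x))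
  obtain ⟨i, hVi⟩ := hVU j
  exact ⟨i, fun z hz => hVi ((Set.ext_iff.1 hz j).2 hxj)⟩

theorem exists_opens_subset_injOn (hπ : IsLocalHomeomorph π) {s : Set X} (hs : IsOpen s) {x : X}
    (hx : x ∈ s) : ∃ U : Opens X, x ∈ U ∧ (U : Set X) ⊆ s ∧ InjOn π U := by
  obtain ⟨e, hxe, rfl⟩ := hπ x
  exact ⟨⟨s ∩ e.source, hs.inter e.open_source⟩, ⟨hx, hxe⟩, inter_subset_left,
    e.injOn.mono inter_subset_right⟩

theorem exists_isLocallyConstant_subset_and_injOn [CompactSpace X] [T2Space X]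
    [TotallyDisconnectedSpace X] (hπ : IsLocalHomeomorph π) {Q : Set (Set X)}
    (hQopen : ∀ q ∈ Q, IsOpen q) (hQcover : ⋃₀ Q = univ) :
    ∃ (n : ℕ) (f : X → Set (Fin n)), IsLocallyConstant f ∧
      ∀ x, (∃ q ∈ Q, {z | f z = f x} ⊆ q) ∧ InjOn π {z | f z = f x} := by
  choose q hqQ hxq using sUnion_eq_univ_iff.1 hQcover
  choose U hxU hUq hUinj using fun x => exists_opens_subset_injOn hπ (hQopen _ (hqQ x)) (hxq x)
  have hUcover : IsOpenCover U := .mk (eq_top_iff.2 fun x _ => Opens.mem_iSup.2 ⟨x, hxU x⟩)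
  obtain ⟨n, f, hf, hfU⟩ := exists_isLocallyConstant_setOf_eq_subset hUcover
  refine ⟨n, f, hf, fun x => ?_⟩
  obtain ⟨i, hi⟩ := hfU x
  exact ⟨⟨q i, hqQ i, hi.trans (hUq i)⟩, (hUinj i).mono hi⟩

end LocallyConstant

theorem exists_pi_partition_refining_general
    {X Y : Type*} [TopologicalSpace X] [CompactSpace X] [T2Space X]
    [TotallyDisconnectedSpace X] [TopologicalSpace Y] [T2Space Y]
    (π : X → Y) (hπloc : IsLocalHomeomorph π)
    (Q : Set (Set X)) (hQopen : ∀ q ∈ Q, IsOpen q) (hQcover : ⋃₀ Q = Set.univ) :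
    ∃ P : Set (Set X), P.Finite ∧ (∀ p ∈ P, IsClopen p) ∧ (∀ p ∈ P, p.Nonempty) ∧
      P.PairwiseDisjoint id ∧ ⋃₀ P = Set.univ ∧
      (∀ p ∈ P, ∃ q ∈ Q, p ⊆ q) ∧
      (∀ p ∈ P, Set.InjOn π p) ∧
      (∀ p ∈ P, ∀ p' ∈ P, π '' p = π '' p' ∨ Disjoint (π '' p) (π '' p')) := by
  obtain ⟨n, f, hf, hfQ⟩ := exists_isLocallyConstant_subset_and_injOn hπloc hQopen hQcover
  have hrefinement : IsLocallyConstant (fiberRefinement π f) :=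
    isLocallyConstant_fiberRefinement hπloc.continuous hπloc.isOpenMap
      hπloc.continuous.isClosedMap hf
  have hpartition := Setoid.isPartition_classes (Setoid.ker (fiberRefinement π f))
  refine ⟨(Setoid.ker (fiberRefinement π f)).classes, Setoid.finite_classes_ker _,
    fun p hp => isClopen_of_mem_classes_ker hrefinement hp,
    fun p hp => Setoid.nonempty_of_mem_partition hpartition hp,
    hpartition.pairwiseDisjoint, hpartition.sUnion_eq_univ, fun p hp => ?_, fun p hp => ?_,
    fun p hp p' hp' => image_eq_or_disjoint_of_mem_classes_ker_fiberRefinement hp hp'⟩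
  all_goals obtain ⟨x, hpx⟩ := exists_subset_setOf_eq_of_mem_classes_ker_fiberRefinement hp
  · obtain ⟨q, hq, hxq⟩ := (hfQ x).1
    exact ⟨q, hq, hpx.trans hxq⟩
  · exact (hfQ x).2.mono hpx

/-- **Existence of `π`-partitions.** Let `X` and `Y` be compact Hausdorff totally
disconnected spaces and let `π : X → Y` be a surjective local homeomorphism. Then every
finite partition `Q` of `X` into (nonempty) clopen sets is refined by a finite partition
`P` of `X` into (nonempty) clopen `π`-sections such that the images under `π` of any two
members of `P` are either equal or disjoint (a `π`-partition). -/
theorem exists_pi_partition_refining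
    {X Y : Type*} [TopologicalSpace X] [CompactSpace X] [T2Space X]
    [TotallyDisconnectedSpace X]
    [TopologicalSpace Y] [CompactSpace Y] [T2Space Y] [TotallyDisconnectedSpace Y]
    (π : X → Y) (hπ : Function.Surjective π) (hπloc : IsLocalHomeomorph π)
    (Q : Set (Set X)) (hQfin : Q.Finite) (hQclopen : ∀ q ∈ Q, IsClopen q)
    (hQne : ∀ q ∈ Q, q.Nonempty) (hQdisj : Q.PairwiseDisjoint id)
    (hQcover : ⋃₀ Q = Set.univ) :
    ∃ P : Set (Set X), P.Finite ∧ (∀ p ∈ P, IsClopen p) ∧ (∀ p ∈ P, p.Nonempty) ∧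
      P.PairwiseDisjoint id ∧ ⋃₀ P = Set.univ ∧
      (∀ p ∈ P, ∃ q ∈ Q, p ⊆ q) ∧
      (∀ p ∈ P, Set.InjOn π p) ∧
      (∀ p ∈ P, ∀ p' ∈ P, π '' p = π '' p' ∨ Disjoint (π '' p) (π '' p')) :=
  exists_pi_partition_refining_general π hπloc Q (fun q hq => (hQclopen q hq).isOpen) hQcover
end

section
/- Let d ≥ 1 and let A be a d × d real matrix with all entries strictly positive. Then there exists exactly one sequence (ρ_n)_{n ≥ 0} of vectors in ℝ^d with all coordinates strictly positive such that ρ_{n-1} = A ρ_n for all n ≥ 1 and Σ_{v=1}^d ρ_0(v) = 1. Moreover, for this sequence there exists λ > 0 such that A ρ_0 = λ ρ_0 and ρ_n = λ^{-n} ρ_0 for all n ≥ 0 (λ is the Perron–Frobenius eigenvalue of A and ρ_0 the normalized Perron–Frobenius eigenvector). -/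
/-!
Maximising `t` subject to `t x ≤ A x` over nonnegative nonzero `x` (Collatz–Wielandt) gives a
strictly positive eigenvector `v` of `A` with eigenvalue `l > 0`, and the same applied to the
transpose gives a strictly positive left eigenvector `u`, necessarily for the same `l`. If `ρ` is
nonnegative and harmonic for `A`, then `s n = l ^ n ρ n` is harmonic for `B = l⁻¹ A`, which fixes
`u` and `v`. Let `c` be the largest number with `c v ≤ s n` for all `n`. The remainder
`τ n = s n - c v` is again nonnegative and harmonic, so `u ⬝ τ n` does not depend on `n`. Since `B`
has positive entries, `τ n = B τ (n + 1)` is bounded below by a fixed positive multiple of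
`(u ⬝ τ 0) v`; maximality of `c` forces `u ⬝ τ 0 = 0`, hence `τ = 0` and `ρ n = l⁻ⁿ c v`.

For vectors, `0 < x` means that `x` is nonnegative and nonzero; strict positivity of all
coordinates is written `∀ i, 0 < x i`.
-/

open scoped Matrix Topology

section PositiveMatrices

variable {m n R : Type*}

lemma dotProduct_pos_of_forall_pos [Fintype n] [Semiring R] [PartialOrder R]
    [IsStrictOrderedRing R] {u w : n → R} (hu : ∀ j, 0 < u j) (hw : 0 < w) : 0 < u ⬝ᵥ w := by
  obtain ⟨hw_nonneg, j, hj⟩ := Pi.lt_def.1 hw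
  exact Finset.sum_pos' (fun k _ => mul_nonneg (hu k).le (hw_nonneg k))
    ⟨j, Finset.mem_univ j, mul_pos (hu j) hj⟩

lemma mulVec_pos_of_forall_pos [Fintype n] [Semiring R] [PartialOrder R]
    [IsStrictOrderedRing R] {A : Matrix m n R} (hA : ∀ i j, 0 < A i j) {w : n → R} (hw : 0 < w)
    (i : m) : 0 < (A *ᵥ w) i :=
  dotProduct_pos_of_forall_pos (hA i) hw

lemma eigenvalue_eq_of_dotProduct_ne_zero [Fintype n] [CommRing R] [IsDomain R]
    {A : Matrix n n R} {u v : n → R} {k l : R} (hu : u ᵥ* A = k • u) (hv : A *ᵥ v = l • v)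
    (huv : u ⬝ᵥ v ≠ 0) : k = l := by
  have pairing : k * (u ⬝ᵥ v) = l * (u ⬝ᵥ v) := by
    rw [← smul_eq_mul, ← smul_eq_mul, ← smul_dotProduct, ← dotProduct_smul, ← hu, ← hv,
      Matrix.dotProduct_mulVec]
  exact mul_right_cancel₀ huv pairing

lemma exists_pos_smul_le [Finite n] (f : n → ℝ) {g : n → ℝ} (hg : ∀ i, 0 < g i) :
    ∃ ε : ℝ, 0 < ε ∧ ε • f ≤ g := by
  have small (i : n) : ∀ᶠ ε : ℝ in 𝓝[>] 0, ε * f i < g i :=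
    (((continuous_mul_const (f i)).tendsto' 0 0 (zero_mul _)).eventually_lt_const
      (hg i)).filter_mono nhdsWithin_le_nhds
  obtain ⟨ε, hε_lt, hε⟩ := ((Filter.eventually_all.2 small).and self_mem_nhdsWithin).exists
  exact ⟨ε, hε, fun i => (hε_lt i).le⟩

lemma exists_pos_forall_smul_le_mulVec [Finite m] [Fintype n] {B : Matrix m n ℝ}
    (hB : ∀ i j, 0 < B i j) (u : n → ℝ) (v : m → ℝ) :
    ∃ δ : ℝ, 0 < δ ∧ ∀ w, 0 ≤ w → (δ * (u ⬝ᵥ w)) • v ≤ B *ᵥ w := by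
  obtain ⟨δ, hδ, hδ_le⟩ := exists_pos_smul_le (fun p : m × n => v p.1 * u p.2)
    (g := fun p => B p.1 p.2) fun p => hB p.1 p.2
  refine ⟨δ, hδ, fun w hw i => ?_⟩
  calc δ * (u ⬝ᵥ w) * v i = ∑ j, δ * (v i * u j) * w j := by
        simp only [dotProduct, Finset.mul_sum, Finset.sum_mul]
        exact Finset.sum_congr rfl fun j _ => by ring
    _ ≤ (B *ᵥ w) i :=
        Finset.sum_le_sum fun j _ => mul_le_mul_of_nonneg_right (hδ_le (i, j)) (hw j)

end PositiveMatrices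

section StdSimplex

variable {𝕜 ι : Type*} [Fintype ι]

lemma pos_of_mem_stdSimplex [Semiring 𝕜] [PartialOrder 𝕜] [Nontrivial 𝕜] {x : ι → 𝕜}
    (hx : x ∈ stdSimplex 𝕜 ι) : 0 < x := by
  refine lt_of_le_of_ne hx.1 ?_
  rintro rfl
  simpa using hx.2

lemma inv_sum_smul_mem_stdSimplex [Field 𝕜] [LinearOrder 𝕜] [IsStrictOrderedRing 𝕜] {x : ι → 𝕜}
    (hx : 0 < x) : (∑ i, x i)⁻¹ • x ∈ stdSimplex 𝕜 ι := by
  have sum_pos : 0 < ∑ i, x i := Fintype.sum_pos hx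
  refine ⟨fun i => mul_nonneg (inv_nonneg.2 sum_pos.le) (hx.le i), ?_⟩
  simp only [Pi.smul_apply, smul_eq_mul, ← Finset.mul_sum]
  exact inv_mul_cancel₀ sum_pos.ne'

end StdSimplex

section Perron

variable {ι : Type*} [Fintype ι] {A : Matrix ι ι ℝ}

/-- The Collatz–Wielandt set of `A`, consisting of the levels `t` at which some nonnegative nonzero
vector is subinvariant, `t x ≤ A x`. Its greatest element is the Perron–Frobenius eigenvalue. -/
def collatzWielandtSet (A : Matrix ι ι ℝ) : Set ℝ :=
  {t | ∃ x : ι → ℝ, 0 < x ∧ t • x ≤ A *ᵥ x}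

lemma mem_collatzWielandtSet_iff_exists_mem_stdSimplex {t : ℝ} :
    t ∈ collatzWielandtSet A ↔ ∃ x ∈ stdSimplex ℝ ι, t • x ≤ A *ᵥ x := by
  refine ⟨fun ⟨x, hx, hle⟩ => ⟨_, inv_sum_smul_mem_stdSimplex hx, ?_⟩,
    fun ⟨x, hx, hle⟩ => ⟨x, pos_of_mem_stdSimplex hx, hle⟩⟩
  rw [Matrix.mulVec_smul, smul_comm]
  exact smul_le_smul_of_nonneg_left hle (inv_nonneg.2 (Finset.sum_nonneg fun i _ => hx.le i))

lemma le_sum_of_mem_collatzWielandtSet (hA : ∀ i j, 0 ≤ A i j) {t : ℝ}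
    (ht : t ∈ collatzWielandtSet A) : t ≤ ∑ i, ∑ j, A i j := by
  obtain ⟨x, hx, hle⟩ := mem_collatzWielandtSet_iff_exists_mem_stdSimplex.1 ht
  calc t = ∑ i, t * x i := by rw [← Finset.mul_sum, hx.2, mul_one]
    _ ≤ ∑ i, ∑ j, A i j * x j := Finset.sum_le_sum fun i _ => hle i
    _ ≤ ∑ i, ∑ j, A i j := by
        gcongr with i _ j _
        exact mul_le_of_le_one_right (hA i j) (mem_Icc_of_mem_stdSimplex hx j).2

lemma isCompact_collatzWielandtSet_inter_Ici (hA : ∀ i j, 0 ≤ A i j) :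
    IsCompact (collatzWielandtSet A ∩ Set.Ici 0) := by
  have isClosed_subinvariant :
      IsClosed {p : (ι → ℝ) × ℝ | p.2 • p.1 ≤ A *ᵥ p.1} :=
    isClosed_le (by fun_prop) (by fun_prop)
  have isCompact_pairs :=
    ((isCompact_stdSimplex ℝ ι).prod
      (isCompact_Icc (a := (0 : ℝ)) (b := ∑ i, ∑ j, A i j))).inter_right isClosed_subinvariant
  convert isCompact_pairs.image continuous_snd using 1
  ext t
  constructor
  · rintro ⟨ht, ht_nonneg⟩
    obtain ⟨x, hx, hle⟩ := mem_collatzWielandtSet_iff_exists_mem_stdSimplex.1 ht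
    exact ⟨(x, t), ⟨⟨hx, ht_nonneg, le_sum_of_mem_collatzWielandtSet hA ht⟩, hle⟩, rfl⟩
  · rintro ⟨⟨x, t⟩, ⟨⟨hx, ht_nonneg, -⟩, hle⟩, rfl⟩
    exact ⟨mem_collatzWielandtSet_iff_exists_mem_stdSimplex.2 ⟨x, hx, hle⟩, ht_nonneg⟩

lemma zero_mem_collatzWielandtSet [Nonempty ι] (hA : ∀ i j, 0 ≤ A i j) :
    0 ∈ collatzWielandtSet A := by
  refine ⟨1, one_pos, fun i => ?_⟩
  simpa [Matrix.mulVec, dotProduct] using Finset.sum_nonneg fun j _ => hA i j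

lemma exists_isGreatest_collatzWielandtSet [Nonempty ι] (hA : ∀ i j, 0 ≤ A i j) :
    ∃ r, IsGreatest (collatzWielandtSet A) r := by
  obtain ⟨r, ⟨hr, hr_nonneg⟩, hr_max⟩ :=
    (isCompact_collatzWielandtSet_inter_Ici hA).exists_isGreatest
      ⟨0, zero_mem_collatzWielandtSet hA, Set.self_mem_Ici⟩
  exact ⟨r, hr, fun t ht => (le_total 0 t).elim (fun h => hr_max ⟨ht, h⟩) hr_nonneg.trans'⟩

-- Otherwise `A (A x - r x)` is strictly positive, so `A x` is subinvariant at a level above `r`.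
lemma mulVec_eq_smul_of_isGreatest_collatzWielandtSet (hA : ∀ i j, 0 < A i j) {r : ℝ}
    (hr : IsGreatest (collatzWielandtSet A) r) {x : ι → ℝ} (hx : 0 < x)
    (hle : r • x ≤ A *ᵥ x) : A *ᵥ x = r • x := by
  by_contra hne
  have gap_pos : 0 < A *ᵥ x - r • x := sub_pos.2 (lt_of_le_of_ne hle (Ne.symm hne))
  obtain ⟨ε, hε, hε_le⟩ := exists_pos_smul_le (A *ᵥ x) (mulVec_pos_of_forall_pos hA gap_pos)
  have image_pos : 0 < A *ᵥ x := by
    obtain ⟨-, i, -⟩ := Pi.lt_def.1 hx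
    exact Pi.lt_def.2 ⟨fun j => (mulVec_pos_of_forall_pos hA hx j).le, i,
      mulVec_pos_of_forall_pos hA hx i⟩
  have subinvariant : (r + ε) • A *ᵥ x ≤ A *ᵥ (A *ᵥ x) := by
    rw [Matrix.mulVec_sub, Matrix.mulVec_smul] at hε_le
    rw [add_smul]
    exact le_sub_iff_add_le'.1 hε_le
  have : r + ε ≤ r := hr.2 ⟨A *ᵥ x, image_pos, subinvariant⟩
  linarith

theorem exists_pos_eigenvector_of_forall_pos [Nonempty ι] (hA : ∀ i j, 0 < A i j) :
    ∃ (l : ℝ) (v : ι → ℝ), 0 < l ∧ (∀ i, 0 < v i) ∧ ∑ i, v i = 1 ∧ A *ᵥ v = l • v := by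
  obtain ⟨r, hr⟩ := exists_isGreatest_collatzWielandtSet fun i j => (hA i j).le
  obtain ⟨x, hx, hle⟩ := mem_collatzWielandtSet_iff_exists_mem_stdSimplex.1 hr.1
  have x_pos : 0 < x := pos_of_mem_stdSimplex hx
  have eigen : A *ᵥ x = r • x :=
    mulVec_eq_smul_of_isGreatest_collatzWielandtSet hA hr x_pos hle
  have prod_pos (i : ι) : 0 < r * x i := by
    simpa [eigen] using mulVec_pos_of_forall_pos hA x_pos i
  have r_pos : 0 < r :=
    pos_of_mul_pos_left (prod_pos (Classical.arbitrary ι)) (hx.1 _)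
  exact ⟨r, x, r_pos, fun i => pos_of_mul_pos_right (prod_pos i) r_pos.le, hx.2, eigen⟩

theorem exists_pos_left_right_eigenvectors_of_forall_pos [Nonempty ι] (hA : ∀ i j, 0 < A i j) :
    ∃ (l : ℝ) (u v : ι → ℝ), 0 < l ∧ (∀ i, 0 < u i) ∧ u ᵥ* A = l • u ∧
      (∀ i, 0 < v i) ∧ ∑ i, v i = 1 ∧ A *ᵥ v = l • v := by
  obtain ⟨l, v, hl, hv, hv_sum, hAv⟩ := exists_pos_eigenvector_of_forall_pos hA
  obtain ⟨k, u, -, hu, -, hAu⟩ := exists_pos_eigenvector_of_forall_pos (A := Aᵀ) fun i j => hA j i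
  rw [Matrix.mulVec_transpose] at hAu
  have v_pos : 0 < v := pos_of_mem_stdSimplex ⟨fun i => (hv i).le, hv_sum⟩
  obtain rfl : k = l :=
    eigenvalue_eq_of_dotProduct_ne_zero hAu hAv (dotProduct_pos_of_forall_pos hu v_pos).ne'
  exact ⟨k, u, v, hl, hu, hAu, hv, hv_sum, hAv⟩

end Perron

lemma exists_isGreatest_forall_smul_le {κ ι : Type*} [Nonempty κ] {s : κ → ι → ℝ}
    (hs : ∀ k, 0 ≤ s k) {v : ι → ℝ} {i : ι} (hi : 0 < v i) :
    ∃ c, IsGreatest {t : ℝ | ∀ k, t • v ≤ s k} c := by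
  have nonempty : {t : ℝ | ∀ k, t • v ≤ s k}.Nonempty := ⟨0, fun k => by simpa using hs k⟩
  have bddAbove : BddAbove {t : ℝ | ∀ k, t • v ≤ s k} :=
    ⟨s (Classical.arbitrary κ) i / v i, fun t ht => (le_div_iff₀ hi).2 (ht _ i)⟩
  have isClosed : IsClosed {t : ℝ | ∀ k, t • v ≤ s k} := by
    simp only [Set.ofPred_forall]
    exact isClosed_iInter fun k => isClosed_le (by fun_prop) continuous_const
  exact ⟨_, isClosed.csSup_mem nonempty bddAbove, fun t ht => le_csSup bddAbove ht⟩

/-- A sequence of vectors is harmonic for `A` if each term is the image under `A` of the next one,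
that is, `ρ (n - 1) = A ρ n` for `n ≥ 1`. -/
def IsHarmonicSeq {R ι : Type*} [NonUnitalNonAssocSemiring R] [Fintype ι] (A : Matrix ι ι R)
    (ρ : ℕ → ι → R) : Prop :=
  ∀ n, ρ n = A *ᵥ ρ (n + 1)

namespace IsHarmonicSeq

section Algebra

variable {R K ι : Type*} [Fintype ι]

lemma sub_const [NonUnitalNonAssocRing R] {A : Matrix ι ι R} {ρ : ℕ → ι → R} {w : ι → R}
    (hρ : IsHarmonicSeq A ρ) (hw : A *ᵥ w = w) : IsHarmonicSeq A fun n => ρ n - w := fun n => by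
  rw [Matrix.mulVec_sub, hw, ← hρ n]

lemma dotProduct_eq [NonUnitalSemiring R] {A : Matrix ι ι R} {ρ : ℕ → ι → R} {u : ι → R}
    (hρ : IsHarmonicSeq A ρ) (hu : u ᵥ* A = u) (n : ℕ) : u ⬝ᵥ ρ n = u ⬝ᵥ ρ 0 := by
  induction n with
  | zero => rfl
  | succ n ih => rw [← ih, hρ n, Matrix.dotProduct_mulVec, hu]

variable [Field K] {A : Matrix ι ι K} {l : K}

lemma pow_smul {ρ : ℕ → ι → K} (hρ : IsHarmonicSeq A ρ) (hl : l ≠ 0) :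
    IsHarmonicSeq (l⁻¹ • A) fun n => l ^ n • ρ n := fun n => by
  rw [Matrix.smul_mulVec, Matrix.mulVec_smul, ← hρ n, smul_smul, pow_succ',
    inv_mul_cancel_left₀ hl]

lemma of_eigenvector {v : ι → K} (hv : A *ᵥ v = l • v) (hl : l ≠ 0) :
    IsHarmonicSeq A fun n => (l ^ n)⁻¹ • v := fun n => by
  rw [Matrix.mulVec_smul, hv, smul_smul, pow_succ, mul_inv, inv_mul_cancel_right₀ hl]

end Algebra

variable {ι : Type*} [Fintype ι] {A B : Matrix ι ι ℝ} {u v : ι → ℝ}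

lemma exists_pos_forall_smul_le (hB : ∀ i j, 0 < B i j) (hu : u ᵥ* B = u) (v : ι → ℝ) :
    ∃ δ : ℝ, 0 < δ ∧ ∀ τ : ℕ → ι → ℝ, (∀ n, 0 ≤ τ n) → IsHarmonicSeq B τ →
      ∀ n, (δ * (u ⬝ᵥ τ 0)) • v ≤ τ n := by
  obtain ⟨δ, hδ, hδ_le⟩ := exists_pos_forall_smul_le_mulVec hB u v
  refine ⟨δ, hδ, fun τ hτ_nonneg hτ n => ?_⟩
  rw [← hτ.dotProduct_eq hu (n + 1), hτ n]
  exact hδ_le _ (hτ_nonneg (n + 1))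

theorem exists_eq_smul_of_fixed (hB : ∀ i j, 0 < B i j) (hu : ∀ i, 0 < u i) (hBu : u ᵥ* B = u)
    (hv : 0 < v) (hBv : B *ᵥ v = v) {s : ℕ → ι → ℝ} (hs : IsHarmonicSeq B s)
    (hs_nonneg : ∀ n, 0 ≤ s n) : ∃ c : ℝ, ∀ n, s n = c • v := by
  obtain ⟨-, i, hi⟩ := Pi.lt_def.1 hv
  obtain ⟨c, hc, hc_max⟩ := exists_isGreatest_forall_smul_le hs_nonneg hi
  have remainder_nonneg (n : ℕ) : 0 ≤ s n - c • v := sub_nonneg.2 (hc n)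
  have remainder_harmonic : IsHarmonicSeq B fun n => s n - c • v :=
    hs.sub_const (by rw [Matrix.mulVec_smul, hBv])
  obtain ⟨δ, hδ, hδ_le⟩ := exists_pos_forall_smul_le hB hBu v
  have pairing_nonpos : u ⬝ᵥ (s 0 - c • v) ≤ 0 := by
    have raised : c + δ * (u ⬝ᵥ (s 0 - c • v)) ≤ c := hc_max fun n => by
      rw [add_smul]
      exact le_sub_iff_add_le'.1 (hδ_le _ remainder_nonneg remainder_harmonic n)
    exact nonpos_of_mul_nonpos_right (by linarith) hδ
  refine ⟨c, fun n => ?_⟩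
  by_contra hne
  have remainder_pos : 0 < s n - c • v :=
    (remainder_nonneg n).lt_of_ne' (sub_ne_zero.2 hne)
  have pairing_pos := dotProduct_pos_of_forall_pos hu remainder_pos
  rw [remainder_harmonic.dotProduct_eq hBu n] at pairing_pos
  exact pairing_pos.not_ge pairing_nonpos

theorem eq_inv_pow_smul_of_eigenvectors (hA : ∀ i j, 0 < A i j) {l : ℝ} (hl : 0 < l)
    (hu : ∀ i, 0 < u i) (hAu : u ᵥ* A = l • u) (hv : v ∈ stdSimplex ℝ ι) (hAv : A *ᵥ v = l • v)
    {ρ : ℕ → ι → ℝ} (hρ : IsHarmonicSeq A ρ) (hρ_nonneg : ∀ n, 0 ≤ ρ n)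
    (hρ_sum : ∑ i, ρ 0 i = 1) (n : ℕ) : ρ n = (l ^ n)⁻¹ • v := by
  obtain ⟨c, hc⟩ := exists_eq_smul_of_fixed (B := l⁻¹ • A)
    (fun i j => mul_pos (inv_pos.2 hl) (hA i j)) hu
    (by rw [Matrix.vecMul_smul, hAu, inv_smul_smul₀ hl.ne'])
    (pos_of_mem_stdSimplex hv)
    (by rw [Matrix.smul_mulVec, hAv, inv_smul_smul₀ hl.ne'])
    (hρ.pow_smul hl.ne') fun k => smul_nonneg (pow_nonneg hl.le k) (hρ_nonneg k)
  have c_eq_one : c = 1 := by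
    have initial : ρ 0 = c • v := by simpa using hc 0
    simpa [initial, ← Finset.mul_sum, hv.2] using hρ_sum
  rw [eq_inv_smul_iff₀ (pow_ne_zero n hl.ne'), hc n, c_eq_one, one_smul]

end IsHarmonicSeq

theorem existsUnique_positive_harmonic_sequence_general {ι : Type*} [Fintype ι] [Nonempty ι]
    (A : Matrix ι ι ℝ) (hA : ∀ i j, 0 < A i j) :
    (∃! ρ : ℕ → ι → ℝ, (∀ n, 0 ≤ ρ n) ∧ IsHarmonicSeq A ρ ∧ ∑ i, ρ 0 i = 1) ∧
    (∀ ρ : ℕ → ι → ℝ, (∀ n, 0 ≤ ρ n) → IsHarmonicSeq A ρ → ∑ i, ρ 0 i = 1 →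
      (∀ n i, 0 < ρ n i) ∧
      ∃ l : ℝ, 0 < l ∧ A *ᵥ ρ 0 = l • ρ 0 ∧ ∀ n : ℕ, ρ n = (l ^ n)⁻¹ • ρ 0) := by
  obtain ⟨l, u, v, hl, hu, hAu, hv, hv_sum, hAv⟩ :=
    exists_pos_left_right_eigenvectors_of_forall_pos hA
  have geometric_pos (n : ℕ) (i : ι) : 0 < ((l ^ n)⁻¹ • v) i :=
    mul_pos (inv_pos.2 (pow_pos hl n)) (hv i)
  have eq_geometric {ρ : ℕ → ι → ℝ} (hρ_nonneg : ∀ n, 0 ≤ ρ n) (hρ : IsHarmonicSeq A ρ)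
      (hρ_sum : ∑ i, ρ 0 i = 1) (n : ℕ) : ρ n = (l ^ n)⁻¹ • v :=
    hρ.eq_inv_pow_smul_of_eigenvectors hA hl hu hAu ⟨fun i => (hv i).le, hv_sum⟩ hAv
      hρ_nonneg hρ_sum n
  refine ⟨⟨fun n => (l ^ n)⁻¹ • v, ⟨fun n i => (geometric_pos n i).le,
    .of_eigenvector hAv hl.ne', by simpa using hv_sum⟩,
    fun ρ ⟨hρ_nonneg, hρ, hρ_sum⟩ => funext (eq_geometric hρ_nonneg hρ hρ_sum)⟩, ?_⟩
  intro ρ hρ_nonneg hρ hρ_sum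
  have ρ_eq := eq_geometric hρ_nonneg hρ hρ_sum
  have initial : ρ 0 = v := by simpa using ρ_eq 0
  exact ⟨fun n i => ρ_eq n ▸ geometric_pos n i, l, hl, initial ▸ hAv, fun n => initial ▸ ρ_eq n⟩

/-- **Perron–Frobenius for strictly positive matrices, stationary harmonic sequences.**
Let `A` be a `d × d` matrix (`d ≥ 1`) with strictly positive entries. Then there is
exactly one sequence `(ρ_n)` of strictly positive vectors in `ℝ^d` with
`ρ_{n-1} = A ρ_n` for all `n ≥ 1` and `∑_v ρ_0(v) = 1`; moreover for this sequence there
is `λ > 0` with `A ρ_0 = λ ρ_0` and `ρ_n = λ⁻ⁿ ρ_0` for all `n` (`λ` being the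
Perron–Frobenius eigenvalue and `ρ_0` the normalized Perron–Frobenius eigenvector). -/
theorem existsUnique_positive_harmonic_sequence
    (d : ℕ) (hd : 1 ≤ d) (A : Matrix (Fin d) (Fin d) ℝ)
    (hA : ∀ i j, 0 < A i j) :
    (∃! ρ : ℕ → Fin d → ℝ,
      (∀ n i, 0 < ρ n i) ∧ (∀ n, ρ n = A.mulVec (ρ (n + 1))) ∧
        (∑ v : Fin d, ρ 0 v = 1)) ∧
    (∀ ρ : ℕ → Fin d → ℝ,
      (∀ n i, 0 < ρ n i) → (∀ n, ρ n = A.mulVec (ρ (n + 1))) →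
        (∑ v : Fin d, ρ 0 v = 1) →
      ∃ lam : ℝ, 0 < lam ∧ A.mulVec (ρ 0) = lam • ρ 0 ∧
        ∀ n : ℕ, ρ n = (lam ^ n)⁻¹ • ρ 0) := by
  have : NeZero d := ⟨by omega⟩
  obtain ⟨⟨ρ, ⟨hρ_nonneg, hρ, hρ_sum⟩, hρ_unique⟩, eigen⟩ :=
    existsUnique_positive_harmonic_sequence_general A hA
  exact ⟨⟨ρ, ⟨(eigen ρ hρ_nonneg hρ hρ_sum).1, hρ, hρ_sum⟩,
    fun σ hσ => hρ_unique σ ⟨fun n i => (hσ.1 n i).le, hσ.2⟩⟩,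
    fun σ hσ_pos hσ hσ_sum => (eigen σ (fun n i => (hσ_pos n i).le) hσ hσ_sum).2⟩
end
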